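/- For every continuous bounded function f : Ω_0 × U_d → ℝ and P_0-almost every ω ∈ Ω_0, liminf_{n→∞} (1/n) log E^{π,ω}_0[ exp( Σ_{k=0}^{n−1} f(τ_{X_k}ω, X_{k+1}−X_k) ) ] ≥ sup_{μ ∈ M_1*} { ⟨f,μ⟩ − I(μ) } = sup_{μ ∈ M_1(Ω_0 × U_d)} { ⟨f,μ⟩ − I(μ) }. -/

import Mathlib

open MeasureTheory ProbabilityTheory Filter Topology
open scoped ENNReal NNReal BigOperators

noncomputable section

namespace SRWPC

/-- Vertices of the lattice `ℤ^d`. -/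
abbrev V (d : ℕ) := Fin d → ℤ

/-- Index of a nearest-neighbour bond: the bond from `x` to `x + eᵢ`. -/
abbrev EdgeIx (d : ℕ) := V d × Fin d

/-- Percolation configurations `Ω = {0,1}^{𝔹_d}`. -/
abbrev Config (d : ℕ) := EdgeIx d → Bool

/-- The `i`-th coordinate unit vector. -/
def unitVec (d : ℕ) (i : Fin d) : V d := fun j => if j = i then 1 else 0

/-- The set `𝕌_d` of the `2d` unit vectors. -/
def Ud (d : ℕ) : Finset (V d) :=
  (Finset.univ.image (unitVec d)) ∪ (Finset.univ.image (fun i => -unitVec d i))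

/-- The type of nearest-neighbour steps (elements of `𝕌_d`). -/
abbrev Step (d : ℕ) := {e : V d // e ∈ Ud d}

/-- The shift `(τ_x ω)_b = ω_{x+b}`. -/
def shift {d : ℕ} (x : V d) (ω : Config d) : Config d := fun b => ω (b.1 + x, b.2)

/-- The bond from `x` to `x + e` is open in `ω`. -/
def edgeOpen {d : ℕ} (ω : Config d) (x e : V d) : Prop :=
  ∃ i : Fin d, (e = unitVec d i ∧ ω (x, i) = true) ∨
    (e = -unitVec d i ∧ ω (x - unitVec d i, i) = true)

open Classical in
/-- The number of open bonds incident to `x`. -/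
def openDeg {d : ℕ} (ω : Config d) (x : V d) : ℕ :=
  ((Ud d).filter (fun e => edgeOpen ω x e)).card

open Classical in
/-- The transition probability `π_ω(x,e)` of the simple random walk on the cluster. -/
def trans {d : ℕ} (ω : Config d) (x e : V d) : ℝ :=
  if edgeOpen ω x e then 1 / openDeg ω x else 0

/-- `γ` restricted to `{0,…,n}` is a nearest-neighbour open path in `ω`. -/
def IsOpenPath {d : ℕ} (ω : Config d) (γ : ℕ → V d) (n : ℕ) : Prop :=
  ∀ k < n, (γ (k + 1) - γ k) ∈ Ud d ∧ edgeOpen ω (γ k) (γ (k + 1) - γ k)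

/-- `x` lies in the box `[-r,r]^d`. -/
def inBox {d : ℕ} (x : V d) (r : ℝ) : Prop := ∀ i, |(x i : ℝ)| ≤ r

/-- `x` is joined to infinity by a nearest-neighbour open path, i.e. `x ∈ 𝒞_∞(ω)`. -/
def memCluster {d : ℕ} (ω : Config d) (x : V d) : Prop :=
  ∀ R : ℕ, ∃ (γ : ℕ → V d) (n : ℕ), γ 0 = x ∧ IsOpenPath ω γ n ∧ ¬ inBox (γ n) R

/-- The event `Ω_0 = {0 ∈ 𝒞_∞}`. -/
def cluZero (d : ℕ) : Set (Config d) := {ω | memCluster ω 0}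

/-- `P` is the Bernoulli bond percolation product measure with parameter `q`. -/
def IsBernoulli (d : ℕ) (q : ℝ) (P : Measure (Config d)) : Prop :=
  IsProbabilityMeasure P ∧
    ∀ (F : Finset (EdgeIx d)) (a : EdgeIx d → Bool),
      P {ω | ∀ b ∈ F, ω b = a b} = ∏ b ∈ F, ENNReal.ofReal (if a b then q else 1 - q)

/-- The critical probability `p_c(d)` of bond percolation on `ℤ^d`. -/
def pc (d : ℕ) : ℝ :=
  sInf {q : ℝ | q ∈ Set.Icc (0 : ℝ) 1 ∧
    ∀ P : Measure (Config d), IsBernoulli d q P → 0 < P (cluZero d)}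

variable {d : ℕ}

/-- Position of the walk after `k` steps, given the sequence of steps `s`. -/
def pos {n : ℕ} (s : Fin n → Step d) (k : ℕ) : V d :=
  ∑ j ∈ Finset.univ.filter (fun j : Fin n => (j : ℕ) < k), (s j).1

/-- The environment/step pair `(τ_{X_k} ω, X_{k+1} - X_k)` seen at time `k`. -/
def envPair (ω : Config d) {n : ℕ} (s : Fin n → Step d) (k : Fin n) : Config d × Step d :=
  (shift (pos s k) ω, s k)

/-- Quenched probability of a given sequence of `n` steps under the Markov kernel `κ`. -/
def pathProb (κ : Config d → Step d → ℝ) (ω : Config d) {n : ℕ} (s : Fin n → Step d) : ℝ :=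
  ∏ k : Fin n, κ (shift (pos s k) ω) (s k)

/-- The SRWPC transition kernel `π`. -/
def srw (d : ℕ) : Config d → Step d → ℝ := fun ω e => trans ω 0 e.1

/-- Quenched expectation (under `P_0^{κ,ω}`) of a functional of the first `n` steps. -/
def qE (κ : Config d → Step d → ℝ) (ω : Config d) {n : ℕ} (F : (Fin n → Step d) → ℝ) : ℝ :=
  ∑ s : Fin n → Step d, pathProb κ ω s * F s

/-- Quenched probability (under `P_0^{κ,ω}`) of a set of `n`-step trajectories. -/
def qP (κ : Config d → Step d → ℝ) (ω : Config d) {n : ℕ} (A : Set (Fin n → Step d)) : ℝ :=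
  ∑ s : Fin n → Step d, A.indicator (fun s' => pathProb κ ω s') s

/-- Quenched probability, `ℝ≥0∞`-valued. -/
def qPE (κ : Config d → Step d → ℝ) (ω : Config d) {n : ℕ} (A : Set (Fin n → Step d)) : ℝ≥0∞ :=
  ENNReal.ofReal (qP κ ω A)

/-- The environment-step space `Ω_0 × 𝕌_d`. -/
abbrev EnvSp (d : ℕ) := Config d × Step d

/-- The pair empirical measure `ℒ_n` as a measure. -/
def empMeas (ω : Config d) {n : ℕ} (s : Fin n → Step d) : Measure (EnvSp d) :=
  (n : ℝ≥0∞)⁻¹ • ∑ k : Fin n, Measure.dirac (envPair ω s k)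

lemma empMeas_isProb (ω : Config d) {n : ℕ} (hn : n ≠ 0) (s : Fin n → Step d) :
    IsProbabilityMeasure (empMeas ω s) := by
  constructor
  simp only [empMeas, Measure.smul_apply, Measure.coe_finset_sum, Finset.sum_apply,
    Measure.dirac_apply_of_mem (Set.mem_univ _), smul_eq_mul]
  rw [Finset.sum_const, Finset.card_univ, Fintype.card_fin, nsmul_eq_mul, mul_one,
    ENNReal.inv_mul_cancel]
  · exact_mod_cast hn
  · exact ENNReal.natCast_ne_top n

/-- The pair empirical measure `ℒ_{n+1}` as a probability measure. -/
def empPM (ω : Config d) {n : ℕ} (s : Fin (n + 1) → Step d) : ProbabilityMeasure (EnvSp d) :=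
  ⟨empMeas ω s, empMeas_isProb ω (Nat.succ_ne_zero n) s⟩

/-- First marginal `(μ)_1` of a measure on `Ω_0 × 𝕌_d`. -/
def marg1 (μ : Measure (EnvSp d)) : Measure (Config d) := μ.map Prod.fst

/-- Second marginal `(μ)_2` of a measure on `Ω_0 × 𝕌_d`. -/
def marg2 (μ : Measure (EnvSp d)) : Measure (Config d) := μ.map (fun q => shift q.2.1 q.1)

/-- The slice `dμ(·, e)` of a measure on `Ω_0 × 𝕌_d` at a fixed step `e`. -/
def slice (μ : Measure (EnvSp d)) (e : Step d) : Measure (Config d) :=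
  (μ.restrict (Set.univ ×ˢ {e})).map Prod.fst

/-- The space `ℳ_1⋆`: probability measures on `Ω_0 × 𝕌_d` whose two marginals coincide and
are absolutely continuous w.r.t. `P₀`, and whose densities `dμ(ω,e)/d(μ)_1(ω)` are positive
precisely on open edges, `P₀`-a.s. -/
def M1star (d : ℕ) (P₀ : Measure (Config d)) : Set (ProbabilityMeasure (EnvSp d)) :=
  {μ | marg1 μ.toMeasure = marg2 μ.toMeasure ∧ marg1 μ.toMeasure ≪ P₀ ∧
    ∃ ρ : Step d → Config d → ℝ≥0∞, (∀ e, Measurable (ρ e)) ∧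
      (∀ e, slice μ.toMeasure e = (marg1 μ.toMeasure).withDensity (ρ e)) ∧
      (∀ e : Step d, ∀ᵐ ω ∂P₀, (0 < ρ e ω ↔ edgeOpen ω 0 e.1))}

/-- The reference measure `π_ω(0,e) d(μ)_1(ω)` on `Ω_0 × 𝕌_d`. -/
def refM (μ : Measure (EnvSp d)) : Measure (EnvSp d) :=
  Measure.sum (fun e : Step d =>
    ((marg1 μ).withDensity (fun ω => ENNReal.ofReal (trans ω 0 e.1))).map (fun ω => (ω, e)))

/-- `x log x - x + 1`. -/
def klFun (x : ℝ) : ℝ := x * Real.log x - x + 1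

open Classical in
/-- The entropy functional `ℑ` (a relative entropy with respect to `refM μ`;
it equals `∫ Σ_e dμ(ω,e) log[dμ(ω,e) / (d(μ)_1(ω) π_ω(0,e))]` on `ℳ_1⋆` and `∞` otherwise). -/
def entI (P₀ : Measure (Config d)) (μ : ProbabilityMeasure (EnvSp d)) : ℝ≥0∞ :=
  if μ ∈ M1star d P₀ ∧ μ.toMeasure ≪ refM μ.toMeasure then
    ∫⁻ q, ENNReal.ofReal (klFun ((μ.toMeasure.rnDeriv (refM μ.toMeasure)) q).toReal)
      ∂(refM μ.toMeasure)
  else ∞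

/-- The pairing `⟨f, μ⟩`. -/
def pairing (f : EnvSp d → ℝ) (μ : ProbabilityMeasure (EnvSp d)) : ℝ :=
  ∫ q, f q ∂μ.toMeasure

/-- The Fenchel–Legendre transform `ℑ⋆` of `ℑ`. -/
def entIstar (P₀ : Measure (Config d)) (f : BoundedContinuousFunction (EnvSp d) ℝ) : EReal :=
  ⨆ μ : ProbabilityMeasure (EnvSp d),
    ((pairing f μ : ℝ) : EReal) - ((entI P₀ μ : ℝ≥0∞) : EReal)

/-- The double Fenchel–Legendre transform `ℑ⋆⋆` of `ℑ`. -/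
def entIbis (P₀ : Measure (Config d)) (μ : ProbabilityMeasure (EnvSp d)) : EReal :=
  ⨆ f : BoundedContinuousFunction (EnvSp d) ℝ,
    ((pairing f μ : ℝ) : EReal) - entIstar P₀ f

/-- The contraction map `ξ(μ) = ∫ Σ_e e dμ(ω,e)`. -/
def xi (μ : ProbabilityMeasure (EnvSp d)) : Fin d → ℝ :=
  fun i => ∫ q, ((q.2.1 i : ℤ) : ℝ) ∂μ.toMeasure

/-- The mean velocity `X_n / n` of a trajectory. -/
def meanVel {n : ℕ} (s : Fin n → Step d) : Fin d → ℝ :=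
  fun i => (n : ℝ)⁻¹ * ((pos s n) i : ℝ)

/-- The class `Π̃` of environment transition kernels. -/
def PiT (d : ℕ) (P₀ : Measure (Config d)) : Set (Config d → Step d → ℝ) :=
  {κ | (∀ e : Step d, Measurable (fun ω => κ ω e)) ∧
    (∀ ω e, 0 ≤ κ ω e) ∧ (∀ e : Step d, ∀ᵐ ω ∂P₀, κ ω e ≤ 1) ∧
    (∀ᵐ ω ∂P₀, ∑ e : Step d, κ ω e = 1) ∧
    (∀ e : Step d, ∀ᵐ ω ∂P₀, (κ ω e = 0 ↔ trans ω 0 e.1 = 0))}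

/-- `φ dP₀` is an invariant probability density for the kernel `κ`. -/
def IsInvDensity (P₀ : Measure (Config d)) (κ : Config d → Step d → ℝ)
    (φ : Config d → ℝ) : Prop :=
  Measurable φ ∧ (∀ ω, 0 ≤ φ ω) ∧ (∫ ω, φ ω ∂P₀) = 1 ∧
    (∀ᵐ ω ∂P₀, φ ω = ∑ e : Step d, κ (shift (-e.1) ω) e * φ (shift (-e.1) ω))

/-- The set `ℰ` of pairs `(π̃, φ)`. -/
def Epairs (d : ℕ) (P₀ : Measure (Config d)) :
    Set ((Config d → Step d → ℝ) × (Config d → ℝ)) :=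
  {q | q.1 ∈ PiT d P₀ ∧ IsInvDensity P₀ q.1 q.2}

/-- The measure `dμ(ω,e) = π̃(ω,e) φ(ω) dP₀(ω)` associated with a pair `(π̃, φ)`. -/
def pairMeasure (P₀ : Measure (Config d)) (κ : Config d → Step d → ℝ)
    (φ : Config d → ℝ) : Measure (EnvSp d) :=
  Measure.sum (fun e : Step d =>
    (P₀.withDensity (fun ω => ENNReal.ofReal (κ ω e * φ ω))).map (fun ω => (ω, e)))

/-- The kernel `dμ/d(μ)_1` associated with a measure on `Ω_0 × 𝕌_d`. -/
def toKappa (μ : Measure (EnvSp d)) : Config d → Step d → ℝ :=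
  fun ω e => ((slice μ e).rnDeriv (marg1 μ) ω).toReal

/-- The density `d(μ)_1/dP₀` associated with a measure on `Ω_0 × 𝕌_d`. -/
def toPhi (P₀ : Measure (Config d)) (μ : Measure (EnvSp d)) : Config d → ℝ :=
  fun ω => ((marg1 μ).rnDeriv P₀ ω).toReal

/-- The environment Markov transition operator `R_κ`. -/
def kernelStep (κ : Config d → Step d → ℝ) (f : Config d → ℝ) : Config d → ℝ :=
  fun ω => ∑ e : Step d, κ ω e * f (shift e.1 ω)

/-- `Q` is an invariant measure for the environment kernel `R_κ`. -/
def IsInvariant (κ : Config d → Step d → ℝ) (Q : Measure (Config d)) : Prop :=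
  ∀ f : Config d → ℝ, Measurable f → (∃ C, ∀ ω, |f ω| ≤ C) →
    ∫ ω, kernelStep κ f ω ∂Q = ∫ ω, f ω ∂Q

/-- Partial sum `Σ_{k<m} f(τ_{X_k}ω, X_{k+1}-X_k)` along a trajectory of length `N`. -/
def partialSumF (f : EnvSp d → ℝ) (ω : Config d) {N : ℕ} (s : Fin N → Step d) (m : ℕ) : ℝ :=
  ∑ k ∈ Finset.univ.filter (fun k : Fin N => (k : ℕ) < m), f (envPair ω s k)

/-- The sum of `G` along the path `γ` up to time `n`. -/
def pathSum (G : Config d → V d → ℝ) (ω : Config d) (γ : ℕ → V d) (n : ℕ) : ℝ :=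
  ∑ k ∈ Finset.range n, G (shift (γ k) ω) (γ (k + 1) - γ k)

/-- The class `𝒢_∞` of gradients: zero mean, uniformly bounded, closed loops. -/
def Ginfty (d : ℕ) (P₀ : Measure (Config d)) : Set (Config d → V d → ℝ) :=
  {G | (∀ e ∈ Ud d, Measurable (fun ω => G ω e)) ∧
    (∀ e ∈ Ud d, ∫ ω, G ω e ∂P₀ = 0) ∧
    (∃ M : ℝ, ∀ e ∈ Ud d, ∀ᵐ ω ∂P₀, |G ω e| ≤ M) ∧
    (∀ᵐ ω ∂P₀, ∀ (γ : ℕ → V d) (n : ℕ),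
      memCluster ω (γ 0) → IsOpenPath ω γ n → γ n = γ 0 → pathSum G ω γ n = 0)}

open Classical in
/-- The corrector `Ψ(ω,x)`: the sum of `G` along some open path from `0` to `x`. -/
def corr (G : Config d → V d → ℝ) (ω : Config d) (x : V d) : ℝ :=
  if h : ∃ q : (ℕ → V d) × ℕ, q.1 0 = 0 ∧ q.1 q.2 = x ∧ IsOpenPath ω q.1 q.2
  then pathSum G ω h.choose.1 h.choose.2 else 0

/-- The chemical distance: minimal length of an open path joining `x` and `y`. -/
def chemDist (ω : Config d) (x y : V d) : ℕ :=
  sInf {n : ℕ | ∃ γ : ℕ → V d, γ 0 = x ∧ γ n = y ∧ IsOpenPath ω γ n}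

open Classical in
/-- The functional `Λ(f,G)`. -/
def Lam (P₀ : Measure (Config d)) (f : EnvSp d → ℝ) (G : Config d → V d → ℝ) : EReal :=
  essSup (fun ω => ((Real.log (∑ e : Step d,
    if edgeOpen ω 0 e.1 then trans ω 0 e.1 * Real.exp (f (ω, e) + G ω e.1) else 0)) : EReal)) P₀

/-- The variational formula `H̄(f) = sup_{μ ∈ ℳ_1⋆} {⟨f,μ⟩ - ℑ(μ)}`. -/
def Hbar (P₀ : Measure (Config d)) (f : EnvSp d → ℝ) : EReal :=
  ⨆ μ ∈ M1star d P₀, ((pairing f μ : ℝ) : EReal) - ((entI P₀ μ : ℝ≥0∞) : EReal)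

/-- The finite σ-algebra `𝓑_k` recording all bonds in the box of size `k` around the origin. -/
def Bsig (d k : ℕ) : MeasurableSpace (Config d) :=
  MeasurableSpace.comap
    (fun (ω : Config d) (b : {b : EdgeIx d // ∀ i, |b.1 i| ≤ (k : ℤ)}) => ω b.1) inferInstance

end SRWPC


namespace SRWPC

/-- Cylinder sets. -/
def Cyl {d : ℕ} (F : Finset (EdgeIx d)) (a : EdgeIx d → Bool) : Set (Config d) :=
  {ω | ∀ b ∈ F, ω b = a b}

def cyls (d : ℕ) : Set (Set (Config d)) := {S | ∃ F a, S = Cyl (d := d) F a}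

lemma measurableSet_Cyl {d : ℕ} (F : Finset (EdgeIx d)) (a : EdgeIx d → Bool) :
    MeasurableSet (Cyl F a) := by
  have : Cyl F a = ⋂ b ∈ F, (fun ω : Config d => ω b) ⁻¹' {a b} := by
    ext ω; simp [Cyl]
  rw [this]
  exact Finset.measurableSet_biInter _ fun b _ => measurable_pi_apply b (measurableSet_singleton _)

lemma cyls_pi (d : ℕ) : IsPiSystem (cyls d) := by
  rintro _ ⟨F, a, rfl⟩ _ ⟨F', a', rfl⟩ ⟨ω, h1, h2⟩
  refine ⟨F ∪ F', ω, ?_⟩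
  ext η
  simp only [Cyl, Set.mem_inter_iff, Set.mem_ofPred_eq, Finset.mem_union] at *
  constructor
  · rintro ⟨h3, h4⟩ b (hb | hb)
    · rw [h3 b hb, h1 b hb]
    · rw [h4 b hb, h2 b hb]
  · intro h
    exact ⟨fun b hb => by rw [h b (Or.inl hb), h1 b hb], fun b hb => by rw [h b (Or.inr hb), h2 b hb]⟩

lemma cyls_gen (d : ℕ) : (inferInstance : MeasurableSpace (Config d)) =
    MeasurableSpace.generateFrom (cyls d) := by
  apply le_antisymm
  · refine iSup_le fun b => ?_
    rw [← measurable_iff_comap_le]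
    refine @measurable_to_bool _ (MeasurableSpace.generateFrom (cyls d)) _ ?_
    apply MeasurableSpace.measurableSet_generateFrom
    refine ⟨{b}, fun _ => true, ?_⟩
    ext ω; simp [Cyl]
  · apply MeasurableSpace.generateFrom_le
    rintro _ ⟨F, a, rfl⟩
    exact measurableSet_Cyl F a

lemma ext_cyl {d : ℕ} {μ ν : Measure (Config d)} [IsFiniteMeasure μ]
    (h : ∀ F a, μ (Cyl F a) = ν (Cyl F a)) : μ = ν := by
  refine ext_of_generate_finite (cyls d) (cyls_gen d) (cyls_pi d) ?_ ?_
  · rintro _ ⟨F, a, rfl⟩; exact h F a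
  · have := h ∅ (fun _ => true)
    simpa [Cyl] using this

lemma measurable_shift {d : ℕ} (x : V d) : Measurable (shift x : Config d → Config d) :=
  measurable_pi_lambda _ fun b => measurable_pi_apply _

/-- shift of the edge index -/
def shEdge {d : ℕ} (x : V d) : EdgeIx d ↪ EdgeIx d :=
  ⟨fun b => (b.1 + x, b.2), fun a b h => by
    simp only [Prod.mk.injEq, add_left_inj] at h
    exact Prod.ext h.1 h.2⟩

lemma shEdge_apply {d : ℕ} (x : V d) (b : EdgeIx d) : shEdge x b = (b.1 + x, b.2) := rfl

lemma shift_preimage_Cyl {d : ℕ} (x : V d) (F : Finset (EdgeIx d)) (a : EdgeIx d → Bool) :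
    shift x ⁻¹' Cyl F a = Cyl (F.map (shEdge x)) (fun b => a (b.1 - x, b.2)) := by
  ext ω
  simp only [Cyl, shift, Set.mem_preimage, Set.mem_ofPred_eq, Finset.mem_map]
  constructor
  · rintro h _ ⟨b, hb, rfl⟩
    simpa [shEdge_apply] using h b hb
  · intro h b hb
    simpa [shEdge_apply] using h _ ⟨b, hb, rfl⟩

lemma bern_cyl {d : ℕ} {q : ℝ} {P : Measure (Config d)} (hP : IsBernoulli d q P)
    (F : Finset (EdgeIx d)) (a : EdgeIx d → Bool) :
    P (Cyl F a) = ∏ b ∈ F, ENNReal.ofReal (if a b then q else 1 - q) := hP.2 F a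

lemma bern_cyl_shift {d : ℕ} {q : ℝ} {P : Measure (Config d)} (hP : IsBernoulli d q P)
    (x : V d) (F : Finset (EdgeIx d)) (a : EdgeIx d → Bool) :
    P (Cyl (F.map (shEdge x)) (fun b => a (b.1 - x, b.2))) = P (Cyl F a) := by
  rw [bern_cyl hP, bern_cyl hP, Finset.prod_map]
  simp [shEdge_apply]

lemma map_shift {d : ℕ} {q : ℝ} {P : Measure (Config d)} (hP : IsBernoulli d q P) (x : V d) :
    P.map (shift x) = P := by
  have := hP.1
  have : IsProbabilityMeasure (P.map (shift x)) :=
    Measure.isProbabilityMeasure_map (measurable_shift x).aemeasurable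
  refine ext_cyl fun F a => ?_
  rw [Measure.map_apply (measurable_shift x) (measurableSet_Cyl F a), shift_preimage_Cyl,
    bern_cyl_shift hP]

lemma shift_apply {d : ℕ} {q : ℝ} {P : Measure (Config d)} (hP : IsBernoulli d q P) (x : V d)
    {A : Set (Config d)} (hA : MeasurableSet A) : P (shift x ⁻¹' A) = P A := by
  rw [← Measure.map_apply (measurable_shift x) hA, map_shift hP]

lemma cyl_inter_shift {d : ℕ} {q : ℝ} {P : Measure (Config d)} (hP : IsBernoulli d q P)
    (x : V d) (F F' : Finset (EdgeIx d)) (a a' : EdgeIx d → Bool)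
    (hdis : Disjoint (F'.map (shEdge x)) F) :
    P (shift x ⁻¹' Cyl F' a' ∩ Cyl F a) = P (Cyl F' a') * P (Cyl F a) := by
  classical
  rw [shift_preimage_Cyl]
  set G := F'.map (shEdge x)
  set c : EdgeIx d → Bool := fun b => a' (b.1 - x, b.2) with hc
  have h1 : Cyl G c ∩ Cyl F a = Cyl (G ∪ F) (fun b => if b ∈ G then c b else a b) := by
    ext ω
    simp only [Cyl, Set.mem_inter_iff, Set.mem_ofPred_eq, Finset.mem_union]
    constructor
    · rintro ⟨h1, h2⟩ b hb
      by_cases hG : b ∈ G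
      · simp [hG, h1 b hG]
      · simp [hG, h2 b (hb.resolve_left hG)]
    · intro h
      refine ⟨fun b hb => by simpa [hb] using h b (Or.inl hb), fun b hb => ?_⟩
      have : b ∉ G := fun h' => (Finset.disjoint_left.1 hdis h') hb
      simpa [this] using h b (Or.inr hb)
  rw [h1, bern_cyl hP, Finset.prod_union hdis, ← bern_cyl_shift hP x F' a', bern_cyl hP G c,
    bern_cyl hP F a]
  congr 1
  · refine Finset.prod_congr rfl fun b hb => ?_
    simp [hb]
  · refine Finset.prod_congr rfl fun b hb => ?_
    have : b ∉ G := fun h' => (Finset.disjoint_left.1 hdis h') hb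
    simp [this]

/-- translation vectors going to infinity -/
def farVec {d : ℕ} (i0 : Fin d) (n : ℕ) : V d := fun j => if j = i0 then (n : ℤ) else 0

lemma eventually_disj {d : ℕ} (i0 : Fin d) (F F' : Finset (EdgeIx d)) :
    ∀ᶠ n : ℕ in atTop, Disjoint (F'.map (shEdge (farVec i0 n))) F := by
  have h : ∀ b' ∈ F', ∀ b ∈ F, ∀ᶠ n : ℕ in atTop, shEdge (farVec i0 n) b' ≠ b := by
    intro b' _ b _
    filter_upwards [eventually_gt_atTop (b.1 i0 - b'.1 i0).toNat] with n hn h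
    have := congrFun (congrArg Prod.fst h) i0
    simp [shEdge_apply, farVec] at this
    omega
  have h2 : ∀ᶠ n : ℕ in atTop, ∀ b' ∈ F', ∀ b ∈ F, shEdge (farVec i0 n) b' ≠ b := by
    rw [Finset.eventually_all]
    intro b' hb'
    rw [Finset.eventually_all]
    intro b hb
    exact h b' hb' b hb
  filter_upwards [h2] with n hn
  rw [Finset.disjoint_left]
  intro c hc hcF
  obtain ⟨b', hb', rfl⟩ := Finset.mem_map.1 hc
  exact hn b' hb' _ hcF rfl

lemma mixing {d : ℕ} {q : ℝ} {P : Measure (Config d)} (hP : IsBernoulli d q P) (i0 : Fin d)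
    (F : Finset (EdgeIx d)) (a : EdgeIx d → Bool) (B : Set (Config d)) (hB : MeasurableSet B) :
    Tendsto (fun n => P.real (shift (farVec i0 n) ⁻¹' B ∩ Cyl F a)) atTop
      (𝓝 (P.real B * P.real (Cyl F a))) := by
  have := hP.1
  induction B, hB using MeasurableSpace.induction_on_inter (cyls_gen d) (cyls_pi d) with
  | empty => simp
  | basic t ht =>
    obtain ⟨F', a', rfl⟩ := ht
    refine tendsto_const_nhds.congr' ?_
    filter_upwards [eventually_disj i0 F F'] with n hn
    simp only [Measure.real]
    rw [cyl_inter_shift hP _ _ _ _ _ hn, ENNReal.toReal_mul]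
  | compl t ht ih =>
    have h1 : ∀ n, P.real (shift (farVec i0 n) ⁻¹' tᶜ ∩ Cyl F a) =
        P.real (Cyl F a) - P.real (shift (farVec i0 n) ⁻¹' t ∩ Cyl F a) := by
      intro n
      rw [eq_sub_iff_add_eq, Set.inter_comm, Set.preimage_compl, ← Set.sdiff_eq,
        Set.inter_comm _ (Cyl F a)]
      rw [add_comm]
      exact measureReal_inter_add_sdiff (measurable_shift _ ht)
    simp_rw [h1]
    rw [probReal_compl_eq_one_sub ht]
    convert (tendsto_const_nhds (x := P.real (Cyl F a))).sub ih using 2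
    ring
  | iUnion f hd hm ih =>
    have h1 : ∀ n, P.real (shift (farVec i0 n) ⁻¹' (⋃ i, f i) ∩ Cyl F a) =
        ∑' i, P.real (shift (farVec i0 n) ⁻¹' (f i) ∩ Cyl F a) := by
      intro n
      rw [Set.preimage_iUnion, Set.iUnion_inter]
      simp only [Measure.real]
      rw [measure_iUnion]
      · rw [ENNReal.tsum_toReal_eq]
        intro i; exact measure_ne_top _ _
      · intro i j hij
        exact ((hd hij).preimage _).mono Set.inter_subset_left Set.inter_subset_left
      · intro i
        exact (measurable_shift _ (hm i)).inter (measurableSet_Cyl F a)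
    have h2 : P.real (⋃ i, f i) = ∑' i, P.real (f i) := by
      simp only [Measure.real]
      rw [measure_iUnion hd hm, ENNReal.tsum_toReal_eq]
      intro i; exact measure_ne_top _ _
    have h3 : Summable fun i => P.real (f i) := by
      apply ENNReal.summable_toReal
      rw [← measure_iUnion hd hm]
      exact measure_ne_top _ _
    simp_rw [h1]
    rw [h2, ← tsum_mul_right]
    refine tendsto_tsum_of_dominated_convergence h3 ih ?_
    refine Eventually.of_forall fun n i => ?_
    rw [Real.norm_of_nonneg measureReal_nonneg]
    calc P.real (shift (farVec i0 n) ⁻¹' f i ∩ Cyl F a) ≤ P.real (shift (farVec i0 n) ⁻¹' f i) :=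
          measureReal_mono Set.inter_subset_left
      _ = P.real (f i) := by simp only [Measure.real]; rw [shift_apply hP _ (hm i)]

/-- Shift-invariant events are trivial. -/
lemma zero_one {d : ℕ} {q : ℝ} {P : Measure (Config d)} (hP : IsBernoulli d q P) (hd : 0 < d)
    {A : Set (Config d)} (hA : MeasurableSet A) (hinv : ∀ x, shift x ⁻¹' A = A) :
    P A = 0 ∨ P A = 1 := by
  have := hP.1
  have h1 : ∀ F a, P.real (A ∩ Cyl F a) = P.real A * P.real (Cyl F a) := by
    intro F a
    have := mixing hP ⟨0, hd⟩ F a A hA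
    simp_rw [hinv] at this
    exact tendsto_nhds_unique tendsto_const_nhds this
  have h2 : P.restrict A = P A • P := by
    refine ext_cyl fun F a => ?_
    rw [Measure.restrict_apply (measurableSet_Cyl F a), Set.inter_comm]
    have := h1 F a
    simp only [Measure.real] at this
    rw [← ENNReal.toReal_mul] at this
    rw [Measure.smul_apply, smul_eq_mul]
    exact (ENNReal.toReal_eq_toReal_iff' (measure_ne_top _ _)
      (ENNReal.mul_ne_top (measure_ne_top _ _) (measure_ne_top _ _))).1 this
  have h3 := congrArg (fun m => m A) h2
  simp only [Measure.restrict_apply_self, Measure.smul_apply, smul_eq_mul] at h3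
  by_cases h0 : P A = 0
  · exact Or.inl h0
  · right
    have h4 : P A * P A = P A * 1 := by rw [← h3, mul_one]
    exact (ENNReal.mul_right_inj h0 (measure_ne_top _ _)).1 h4

open Classical in
/-- Open all edges in a set. -/
def openUp {d : ℕ} (F : Finset (EdgeIx d)) (ω : Config d) : Config d :=
  fun b => if b ∈ F then true else ω b

lemma measurable_openUp {d : ℕ} (F : Finset (EdgeIx d)) :
    Measurable (openUp F : Config d → Config d) := by
  refine measurable_pi_lambda _ fun b => ?_
  by_cases h : b ∈ F
  · simp [openUp, h]
  · simpa [openUp, h] using measurable_pi_apply b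

lemma openUp_single_map {d : ℕ} {q : ℝ} {P : Measure (Config d)} (hP : IsBernoulli d q P)
    (b : EdgeIx d) :
    ENNReal.ofReal q • P.map (openUp {b}) = P.restrict {ω | ω b = true} := by
  classical
  have := hP.1
  symm
  refine ext_cyl fun F a => ?_
  rw [Measure.restrict_apply (measurableSet_Cyl F a), Measure.smul_apply, smul_eq_mul,
    Measure.map_apply (measurable_openUp _) (measurableSet_Cyl F a)]
  by_cases hab : b ∈ F ∧ a b = false
  · have h1 : Cyl F a ∩ {ω | ω b = true} = ∅ := by
      ext ω
      simp only [Cyl, Set.mem_inter_iff, Set.mem_ofPred_eq, Set.mem_empty_iff_false, iff_false,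
        not_and]
      intro h h'
      have := h b hab.1
      rw [hab.2, h'] at this
      cases this
    have h2 : openUp {b} ⁻¹' Cyl F a = ∅ := by
      ext ω
      simp only [Cyl, Set.mem_preimage, Set.mem_ofPred_eq, Set.mem_empty_iff_false, iff_false]
      intro h
      have := h b hab.1
      rw [hab.2] at this
      simp [openUp] at this
    rw [h1, h2]; simp
  · have h1 : Cyl F a ∩ {ω | ω b = true} = Cyl (insert b (F.erase b)) (Function.update a b true) := by
      ext ω
      simp only [Cyl, Set.mem_inter_iff, Set.mem_ofPred_eq, Finset.mem_insert, Finset.mem_erase]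
      constructor
      · rintro ⟨h, h'⟩ c hc
        by_cases hcb : c = b
        · subst hcb; simpa using h'
        · simp [hcb]; exact h c (by tauto)
      · intro h
        refine ⟨fun c hc => ?_, by simpa using h b (Or.inl rfl)⟩
        by_cases hcb : c = b
        · subst hcb
          have := h c (Or.inl rfl)
          have h3 : a c = true := by
            by_contra h4
            exact hab ⟨hc, by simpa using h4⟩
          simpa [h3] using this
        · simpa [hcb] using h c (Or.inr ⟨hcb, hc⟩)
    have h2 : openUp {b} ⁻¹' Cyl F a = Cyl (F.erase b) a := by
      ext ω
      simp only [Cyl, Set.mem_preimage, Set.mem_ofPred_eq, Finset.mem_erase]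
      constructor
      · rintro h c ⟨hcb, hc⟩
        simpa [openUp, hcb] using h c hc
      · intro h c hc
        by_cases hcb : c = b
        · subst hcb
          have h3 : a c = true := by
            by_contra h4
            exact hab ⟨hc, by simpa using h4⟩
          simp [openUp, h3]
        · simpa [openUp, hcb] using h c ⟨hcb, hc⟩
    rw [h1, h2, bern_cyl hP, bern_cyl hP, Finset.prod_insert (by simp)]
    congr 1
    · simp
    · refine Finset.prod_congr rfl fun c hc => ?_
      have : c ≠ b := (Finset.mem_erase.1 hc).1
      simp [this]

/-- Finite energy (insertion tolerance). -/
lemma finite_energy {d : ℕ} {q : ℝ} {P : Measure (Config d)} (hP : IsBernoulli d q P)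
    (hq : 0 < q) (F : Finset (EdgeIx d)) {E : Set (Config d)} (hE : MeasurableSet E)
    (h0 : P E = 0) : P (openUp F ⁻¹' E) = 0 := by
  classical
  induction F using Finset.induction_on generalizing E with
  | empty =>
    have : (openUp ∅ : Config d → Config d) = id := by ext ω b; simp [openUp]
    simpa [this] using h0
  | insert b F _ ih =>
    have : (openUp (insert b F) : Config d → Config d) = openUp {b} ∘ openUp F := by
      ext ω c
      by_cases h1 : c = b <;> by_cases h2 : c ∈ F <;> simp [openUp, h1, h2]
    rw [this, Set.preimage_comp]
    refine ih (measurable_openUp _ hE) ?_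
    have h := congrArg (fun m => m E) (openUp_single_map hP b)
    simp only [Measure.smul_apply, smul_eq_mul] at h
    rw [Measure.map_apply (measurable_openUp _) hE, Measure.restrict_apply hE] at h
    have h5 : P (E ∩ {ω | ω b = true}) = 0 := measure_mono_null Set.inter_subset_left h0
    rw [h5] at h
    rcases mul_eq_zero.1 h with h6 | h6
    · exact absurd h6 (by simpa using hq)
    · exact h6

end SRWPC


namespace SRWPC

section Graph
open Relation

variable {α : Type*} {r : α → α → Prop}

/-- Connectivity of `x,y` by an `r`-path inside `S`. -/
def Cn (r : α → α → Prop) (S : Set α) : α → α → Prop :=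
  ReflTransGen (fun x y => x ∈ S ∧ y ∈ S ∧ r x y)

lemma Cn.symm (hr : ∀ x y, r x y → r y x) {S : Set α} {x y : α} (h : Cn r S x y) : Cn r S y x := by
  unfold Cn at *
  induction h with
  | refl => exact ReflTransGen.refl
  | tail _ h2 ih => exact ReflTransGen.head ⟨h2.2.1, h2.1, hr _ _ h2.2.2⟩ ih

lemma Cn.trans {S : Set α} {x y z : α} (h : Cn r S x y) (h' : Cn r S y z) : Cn r S x z :=
  ReflTransGen.trans h h'

lemma Cn.refl {S : Set α} {x : α} : Cn r S x x := ReflTransGen.refl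

lemma Cn.single {S : Set α} {x y : α} (hx : x ∈ S) (hy : y ∈ S) (h : r x y) : Cn r S x y :=
  ReflTransGen.single ⟨hx, hy, h⟩

lemma Cn.mono {S T : Set α} (hST : S ⊆ T) {x y : α} (h : Cn r S x y) : Cn r T x y := by
  unfold Cn at *
  induction h with
  | refl => exact ReflTransGen.refl
  | tail _ h2 ih => exact ih.tail ⟨hST h2.1, hST h2.2.1, h2.2.2⟩

lemma Cn.mem {S : Set α} {x y : α} (h : Cn r S x y) (hx : x ∈ S) : y ∈ S := by
  unfold Cn at *
  induction h with
  | refl => exact hx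
  | tail _ h2 ih => exact h2.2.1

/-- change the ambient set and the relation along a path -/
lemma Cn.upgrade' {r' : α → α → Prop} {S T : Set α} {x y : α} (h : Cn r S x y)
    (hT : ∀ v, Cn r S x v → v ∈ S → v ∈ T)
    (hr' : ∀ u v, Cn r S x u → u ∈ S → v ∈ S → r u v → r' u v) : Cn r' T x y := by
  unfold Cn at h
  induction h with
  | refl => exact ReflTransGen.refl
  | tail h1 h2 ih =>
    refine ReflTransGen.tail ih ⟨hT _ h1 h2.1, hT _ (ReflTransGen.tail h1 h2) h2.2.1,
      hr' _ _ h1 h2.1 h2.2.1 h2.2.2⟩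

lemma Cn.upgrade {S T : Set α} {x y : α} (h : Cn r S x y)
    (hT : ∀ v, Cn r S x v → v ∈ S → v ∈ T) : Cn r T x y :=
  h.upgrade' hT fun _ _ _ _ _ h => h

/-- first hitting of `K` -/
lemma Cn.first_hit {S K : Set α} {x k : α} (h : Cn r S x k) (hk : k ∈ K) (hx : x ∉ K) :
    ∃ z k1, Cn r (S \ K) x z ∧ z ∈ S \ K ∧ k1 ∈ K ∧ k1 ∈ S ∧ r z k1 := by
  have key : ∀ y, Cn r S x y → (y ∉ K ∧ Cn r (S \ K) x y) ∨
      ∃ z k1, Cn r (S \ K) x z ∧ z ∈ S \ K ∧ k1 ∈ K ∧ k1 ∈ S ∧ r z k1 := by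
    intro y hy
    unfold Cn at hy
    induction hy with
    | refl => exact Or.inl ⟨hx, Cn.refl⟩
    | @tail u v h1 h2 ih =>
      rcases ih with ⟨h3, h4⟩ | h3
      · by_cases hv : v ∈ K
        · exact Or.inr ⟨u, v, h4, ⟨h2.1, h3⟩, hv, h2.2.1, h2.2.2⟩
        · exact Or.inl ⟨hv, h4.trans (Cn.single ⟨h2.1, h3⟩ ⟨h2.2.1, hv⟩ h2.2.2)⟩
      · exact Or.inr h3
  rcases key k h with h1 | h1
  · exact absurd hk h1.1
  · exact h1

/-- A component reaches the removed block. -/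
lemma touch {S K K' : Set α} {β k : α} (hβ : β ∉ K) (h : Cn r S β k)
    (hk : k ∈ K) (hmiss : ∀ y, Cn r (S \ K) β y → y ∉ K') (hd : Disjoint K K') :
    ∃ k1 ∈ K, Cn r (S \ K') β k1 := by
  obtain ⟨z, k1, h1, h2, h3, h4, h5⟩ := h.first_hit hk hβ
  refine ⟨k1, h3, ?_⟩
  have h6 : Cn r (S \ K') β z := h1.upgrade fun v hv hvS => ⟨hvS.1, hmiss v hv⟩
  exact h6.trans (Cn.single ⟨h2.1, hmiss z h1⟩ ⟨h4, Set.disjoint_left.1 hd h3⟩ h5)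

lemma reroute (hr : ∀ x y, r x y → r y x) {S K D : Set α} (hKS : K ⊆ S \ D)
    (hK : ∀ k ∈ K, ∀ k' ∈ K, Cn r K k k')
    (hD : ∀ x ∈ D, ∀ y ∈ S \ K, x ∈ S \ K → r x y → y ∈ D) {x y : α} (hx : x ∉ D) (hy : y ∉ D)
    (h : Cn r S x y) : Cn r (S \ D) x y := by
  have key : ∀ z, Cn r S x z → (z ∉ D ∧ Cn r (S \ D) x z) ∨
      (z ∈ D ∧ ∃ k ∈ K, Cn r (S \ D) x k) := by
    intro z hz
    unfold Cn at hz
    induction hz with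
    | refl => exact Or.inl ⟨hx, Cn.refl⟩
    | @tail u v h1 h2 ih =>
      rcases ih with ⟨h3, h4⟩ | ⟨h3, k, hk, h4⟩
      · by_cases hv : v ∈ D
        · right
          refine ⟨hv, u, ?_, h4⟩
          by_contra huK
          have hvK : v ∉ K := fun hvK => (hKS hvK).2 hv
          exact h3 (hD v hv u ⟨h2.1, huK⟩ ⟨h2.2.1, hvK⟩ (hr _ _ h2.2.2))
        · exact Or.inl ⟨hv, h4.trans (Cn.single ⟨h2.1, h3⟩ ⟨h2.2.1, hv⟩ h2.2.2)⟩
      · by_cases hv : v ∈ D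
        · exact Or.inr ⟨hv, k, hk, h4⟩
        · left
          have hvK : v ∈ K := by
            by_contra hvK
            have huK : u ∉ K := fun huK => (hKS huK).2 h3
            exact hv (hD u h3 v ⟨h2.2.1, hvK⟩ ⟨h2.1, huK⟩ h2.2.2)
          exact ⟨hv, h4.trans ((hK k hk v hvK).mono hKS)⟩
  rcases key y h with h1 | h1
  · exact h1.2
  · exact absurd h1.1 hy

/-- `K` is a trifurcation set in `S` with branches marked by `B`. -/
def Tri (r : α → α → Prop) (S B K : Set α) : Prop :=
  ∃ t : Fin 3 → α, (∀ i, t i ∈ B ∧ t i ∈ S \ K ∧ ∃ k ∈ K, Cn r S (t i) k) ∧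
    ∀ i j, i ≠ j → ¬ Cn r (S \ K) (t i) (t j)

lemma fin3_pick (p q : Fin 3 → Prop) (hp : ∀ i j, i ≠ j → p i → ¬ p j)
    (hq : ∀ i j, i ≠ j → q i → ¬ q j) : ∃ i, ¬ p i ∧ ¬ q i := by
  by_contra h
  push Not at h
  have h0 := h 0
  have h1 := h 1
  have h2 := h 2
  have a1 := hp 0 1 (by decide)
  have a2 := hp 0 2 (by decide)
  have a3 := hp 1 2 (by decide)
  have b1 := hq 0 1 (by decide)
  have b2 := hq 0 2 (by decide)
  have b3 := hq 1 2 (by decide)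
  tauto

lemma count_tri {ι : Type*} (hr : ∀ x y, r x y → r y x) (K : ι → Set α) :
    ∀ (n : ℕ) (W : Finset ι) (S : Set α) (B : Finset α), W.card = n → S.Finite →
    (∀ w ∈ W, K w ⊆ S) → (∀ w ∈ W, ∀ w' ∈ W, w ≠ w' → Disjoint (K w) (K w')) →
    (∀ w ∈ W, ∀ k ∈ K w, ∀ k' ∈ K w, Cn r (K w) k k') →
    (∀ w ∈ W, Tri r S B (K w)) → W.card ≤ B.card := by
  classical
  intro n
  induction n with
  | zero => intro W S B hW; simp [hW]
  | succ n ih =>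
    intro W S B hW hS hKS hdis hconn htri
    -- minimal branch
    let Pr : ℕ → Prop := fun m => ∃ w ∈ W, ∃ b ∈ B, b ∈ S \ K w ∧ (∃ k ∈ K w, Cn r S b k) ∧
      {x | Cn r (S \ K w) b x}.ncard = m
    have hex : ∃ m, Pr m := by
      have : W.Nonempty := by rw [← Finset.card_pos]; omega
      obtain ⟨w, hw⟩ := this
      obtain ⟨t, ht, _⟩ := htri w hw
      exact ⟨_, w, hw, t 0, by simpa using (ht 0).1, (ht 0).2.1, (ht 0).2.2, rfl⟩
    obtain ⟨w, hw, b, hbB, hbS, ⟨kb, hkb, hbk⟩, hcard⟩ := Nat.find_spec hex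
    have hmin : ∀ m, Pr m → Nat.find hex ≤ m := fun m hm => Nat.find_min' hex hm
    set D : Set α := {x | Cn r (S \ K w) b x} with hDdef
    have hDS : D ⊆ S \ K w := fun x hx => Cn.mem hx hbS
    have hDfin : D.Finite := (hS.subset Set.sdiff_subset).subset hDS
    -- connectivity of one block off the other
    have hKoff : ∀ w ∈ W, ∀ w' ∈ W, w ≠ w' → ∀ k ∈ K w', ∀ k' ∈ K w', Cn r (S \ K w) k k' := by
      intro w hw w' hw' hne k hk k' hk'
      refine (hconn w' hw' k hk k' hk').mono ?_
      intro x hx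
      refine ⟨hKS w' hw' hx, fun hx' => ?_⟩
      exact Set.disjoint_left.1 (hdis w hw w' hw' hne) hx' hx
    -- claim 1
    have claim1 : ∀ w' ∈ W, w' ≠ w → ∀ x ∈ D, x ∉ K w' := by
      intro w' hw' hne x hxD hxK
      obtain ⟨t, ht, htn⟩ := htri w' hw'
      obtain ⟨i, hi, _⟩ := fin3_pick (fun i => ∃ y, Cn r (S \ K w') (t i) y ∧ y ∈ K w)
        (fun i => False) (by
          rintro i j hij ⟨y, hy, hyK⟩ ⟨z, hz, hzK⟩
          exact htn i j hij ((hy.trans (hKoff w' hw' w hw hne y hyK z hzK)).trans (hz.symm hr)))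
        (by simp)
      push Not at hi
      obtain ⟨hiB, hiS, k, hk, hik⟩ := ht i
      obtain ⟨k1, hk1, h1⟩ := touch hiS.2 hik hk hi (hdis w' hw' w hw hne)
      have hiD : Cn r (S \ K w) b (t i) :=
        (Cn.trans hxD (hKoff w hw w' hw' hne.symm x hxK k1 hk1)).trans (h1.symm hr)
      have hsub : {y | Cn r (S \ K w') (t i) y} ⊂ D := by
        refine ⟨fun y hy => ?_, fun h => ?_⟩
        · exact hiD.trans (Cn.upgrade hy fun v hv hvS => ⟨hvS.1, hi v hv⟩)
        · exact (Cn.mem (h hxD) hiS).2 hxK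
      have h2 := Set.ncard_lt_ncard hsub hDfin
      have h3 := hmin _ ⟨w', hw', t i, by simpa using hiB, hiS, ⟨k, hk, hik⟩, rfl⟩
      omega
    -- the reduced system
    have hcard2 : (W.erase w).card = n := by rw [Finset.card_erase_of_mem hw]; omega
    have hB' : (B.filter (fun x => x ∉ D)).card < B.card := by
      apply Finset.card_lt_card
      refine ⟨Finset.filter_subset _ _, fun h => ?_⟩
      have := h hbB
      simp only [Finset.mem_filter] at this
      exact this.2 Cn.refl
    have hKD : K w ⊆ S \ D := fun x hx => ⟨hKS w hw hx, fun hxD => (hDS hxD).2 hx⟩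
    have hDcl : ∀ x ∈ D, ∀ y ∈ S \ K w, x ∈ S \ K w → r x y → y ∈ D := by
      intro x hx y hy hxS hxy
      exact Cn.trans hx (Cn.single hxS hy hxy)
    have hmain := ih (W.erase w) (S \ D) (B.filter (fun x => x ∉ D)) hcard2
      (hS.subset Set.sdiff_subset)
      (fun w' hw' x hx => ⟨hKS w' (Finset.mem_of_mem_erase hw') hx, fun hxD =>
        claim1 w' (Finset.mem_of_mem_erase hw') (Finset.ne_of_mem_erase hw') x hxD hx⟩)
      (fun w1 h1 w2 h2 => hdis w1 (Finset.mem_of_mem_erase h1) w2 (Finset.mem_of_mem_erase h2))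
      (fun w1 h1 => hconn w1 (Finset.mem_of_mem_erase h1)) ?_
    · have : W.card = (W.erase w).card + 1 := by omega
      omega
    intro w' hw'e
    have hw' := Finset.mem_of_mem_erase hw'e
    have hne : w' ≠ w := Finset.ne_of_mem_erase hw'e
    have hrep : ∀ β ∈ B, β ∈ S \ K w' → ∃ β' ∈ B, β' ∉ D ∧ β' ∈ S \ K w' ∧
        Cn r (S \ K w') β β' := by
      intro β hβB hβS
      by_cases hβD : β ∈ D
      · obtain ⟨t, ht, htn⟩ := htri w hw
        obtain ⟨i, hi, hi'⟩ := fin3_pick (fun i => ∃ y, Cn r (S \ K w) (t i) y ∧ y ∈ K w')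
          (fun i => Cn r (S \ K w) b (t i)) (by
            rintro i j hij ⟨y, hy, hyK⟩ ⟨z, hz, hzK⟩
            exact htn i j hij
              ((hy.trans (hKoff w hw w' hw' hne.symm y hyK z hzK)).trans (hz.symm hr)))
          (by
            intro i j hij h1 h2
            exact htn i j hij ((h1.symm hr).trans h2))
        push Not at hi
        obtain ⟨hiB, hiS, k, hk, hik⟩ := ht i
        obtain ⟨k1, hk1, h1⟩ := touch hiS.2 hik hk hi (hdis w hw w' hw' hne.symm)
        obtain ⟨k2, hk2, h2⟩ := touch (K' := K w') hbS.2 hbk hkb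
          (fun y hy => claim1 w' hw' hne y hy) (hdis w hw w' hw' hne.symm)
        have h3 : Cn r (S \ K w') b β :=
          Cn.upgrade hβD fun v hv hvS => ⟨hvS.1, claim1 w' hw' hne v hv⟩
        refine ⟨t i, by simpa using hiB, hi', ⟨hiS.1, hi _ Cn.refl⟩, ?_⟩
        exact (h3.symm hr).trans (h2.trans ((hKoff w' hw' w hw hne k2 hk2 k1 hk1).trans
          (h1.symm hr)))
      · exact ⟨β, hβB, hβD, hβS, Cn.refl⟩
    obtain ⟨t, ht, htn⟩ := htri w' hw'
    choose g hg1 hg2 hg3 hg4 using fun i => hrep (t i) (by simpa using (ht i).1) (ht i).2.1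
    refine ⟨g, fun i => ⟨by simp [hg1 i, hg2 i], ⟨⟨(hg3 i).1, hg2 i⟩, (hg3 i).2⟩, ?_⟩, ?_⟩
    · obtain ⟨k, hk, hik⟩ := (ht i).2.2
      refine ⟨k, hk, reroute hr hKD (hconn w hw) hDcl (hg2 i)
        (fun hkD => claim1 w' hw' hne k hkD hk) ?_⟩
      exact (((hg4 i).mono Set.sdiff_subset).symm hr).trans hik
    · intro i j hij h
      refine htn i j hij (((hg4 i).trans (h.mono ?_)).trans ((hg4 j).symm hr))
      intro x hx
      exact ⟨hx.1.1, hx.2⟩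

end Graph

end SRWPC


namespace SRWPC

section Lattice
variable {d : ℕ}

/-- open adjacency -/
def oadj (ω : Config d) (x y : V d) : Prop := y - x ∈ Ud d ∧ edgeOpen ω x (y - x)

lemma oadj_iff (ω : Config d) (x y : V d) : oadj ω x y ↔
    ∃ i, (y = x + unitVec d i ∧ ω (x, i) = true) ∨ (x = y + unitVec d i ∧ ω (y, i) = true) := by
  unfold oadj edgeOpen
  constructor
  · rintro ⟨_, i, ⟨h1, h2⟩ | ⟨h1, h2⟩⟩
    · exact ⟨i, Or.inl ⟨by rw [← h1]; abel, h2⟩⟩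
    · have h3 : x = y + unitVec d i := by
        have : y = x - unitVec d i := by rw [← sub_add_cancel y x, h1]; abel
        rw [this]; abel
      refine ⟨i, Or.inr ⟨h3, ?_⟩⟩
      rw [h3] at h2
      simpa using h2
  · rintro ⟨i, ⟨h1, h2⟩ | ⟨h1, h2⟩⟩
    · refine ⟨?_, i, Or.inl ⟨by rw [h1]; abel, h2⟩⟩
      rw [h1]; simp [Ud]
    · refine ⟨?_, i, Or.inr ⟨by rw [h1]; abel, by rw [h1]; simpa using h2⟩⟩
      rw [h1]; simp [Ud]

lemma oadj_symm (ω : Config d) (x y : V d) (h : oadj ω x y) : oadj ω y x := by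
  rw [oadj_iff] at *
  obtain ⟨i, h | h⟩ := h
  · exact ⟨i, Or.inr h⟩
  · exact ⟨i, Or.inl h⟩

lemma oadj_shift (ω : Config d) (w x y : V d) :
    oadj (shift w ω) x y ↔ oadj ω (x + w) (y + w) := by
  simp only [oadj_iff, shift]
  refine exists_congr fun i => ?_
  have h1 : y + w = x + w + unitVec d i ↔ y = x + unitVec d i := by
    rw [add_right_comm, add_left_inj]
  have h2 : x + w = y + w + unitVec d i ↔ x = y + unitVec d i := by
    rw [add_right_comm, add_left_inj]
  rw [h1, h2]

/-- boxes -/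
def box (d R : ℕ) : Finset (V d) := Fintype.piFinset fun _ => Finset.Icc (-(R : ℤ)) R

lemma mem_box {R : ℕ} {x : V d} : x ∈ box d R ↔ ∀ i, -(R : ℤ) ≤ x i ∧ x i ≤ R := by
  simp [box]

lemma card_box (R : ℕ) : (box d R).card = (2 * R + 1) ^ d := by
  simp only [box, Fintype.card_piFinset, Int.card_Icc, Finset.prod_const, Finset.card_univ,
    Fintype.card_fin]
  congr 1
  omega

lemma box_mono {R R' : ℕ} (h : R ≤ R') : box d R ⊆ box d R' := by
  intro x hx
  rw [mem_box] at *
  intro i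
  have := hx i
  omega

lemma inBox_iff {R : ℕ} {x : V d} : inBox x R ↔ x ∈ box d R := by
  rw [mem_box]
  unfold inBox
  refine forall_congr' fun i => ?_
  rw [abs_le]
  norm_cast

lemma exists_box (x : V d) : ∃ R : ℕ, x ∈ box d R := by
  refine ⟨∑ i, (x i).natAbs, ?_⟩
  rw [mem_box]
  intro i
  have := Finset.single_le_sum (f := fun i => (x i).natAbs) (fun _ _ => Nat.zero_le _)
    (Finset.mem_univ i)
  omega

lemma unitVec_bound (i j : Fin d) : 0 ≤ unitVec d i j ∧ unitVec d i j ≤ 1 := by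
  unfold unitVec; split_ifs <;> simp

lemma oadj_bound {ω : Config d} {x y : V d} (h : oadj ω x y) (j : Fin d) :
    x j - 1 ≤ y j ∧ y j ≤ x j + 1 := by
  rw [oadj_iff] at h
  obtain ⟨i, ⟨h, _⟩ | ⟨h, _⟩⟩ := h
  · have := unitVec_bound i j
    rw [h]; simp only [Pi.add_apply]; omega
  · have := unitVec_bound i j
    rw [h]; simp only [Pi.add_apply]; omega

/-- infinite reach inside `S` -/
def Infi (ω : Config d) (S : Set (V d)) (x : V d) : Prop :=
  ∀ R : ℕ, ∃ y, Cn (oadj ω) S x y ∧ y ∉ box d R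

lemma Cn_of_path {ω : Config d} {γ : ℕ → V d} {n : ℕ} (h : IsOpenPath ω γ n) :
    Cn (oadj ω) Set.univ (γ 0) (γ n) := by
  induction n with
  | zero => exact Cn.refl
  | succ n ih =>
    exact (ih fun k hk => h k (by omega)).trans
      (Cn.single (Set.mem_univ _) (Set.mem_univ _) (h n (by omega)))

lemma path_of_Cn {ω : Config d} {x y : V d} (h : Cn (oadj ω) Set.univ x y) :
    ∃ (γ : ℕ → V d) (n : ℕ), γ 0 = x ∧ IsOpenPath ω γ n ∧ γ n = y := by
  unfold Cn at h
  induction h with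
  | refl => exact ⟨fun _ => x, 0, rfl, fun k hk => by omega, rfl⟩
  | @tail u v h1 h2 ih =>
    obtain ⟨γ, n, h3, h4, h5⟩ := ih
    refine ⟨fun k => if k ≤ n then γ k else v, n + 1, by simp [h3], ?_, by simp⟩
    intro k hk
    rcases Nat.lt_or_ge k n with hkn | hkn
    · have a1 : k ≤ n := hkn.le
      have a2 : k + 1 ≤ n := hkn
      simp only [a1, a2, if_true]
      exact h4 k hkn
    · have : k = n := by omega
      subst this
      simp only [le_refl, if_true, Nat.not_succ_le_self, if_false, h5]
      exact h2.2.2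

lemma memCluster_iff {ω : Config d} {x : V d} : memCluster ω x ↔ Infi ω Set.univ x := by
  unfold memCluster Infi
  refine forall_congr' fun R => ?_
  constructor
  · rintro ⟨γ, n, h1, h2, h3⟩
    exact ⟨γ n, h1 ▸ Cn_of_path h2, fun h => h3 (inBox_iff.2 h)⟩
  · rintro ⟨y, h1, h2⟩
    obtain ⟨γ, n, h3, h4, h5⟩ := path_of_Cn h1
    exact ⟨γ, n, h3, h4, fun h => h2 (h5 ▸ inBox_iff.1 h)⟩

/-! measurability -/

lemma meas_coord (b : EdgeIx d) : Measurable fun ω : Config d => (ω b = true) := by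
  have h : MeasurableSet ((fun ω : Config d => ω b) ⁻¹' {true}) :=
    (measurable_pi_apply b) (measurableSet_singleton true)
  exact measurableSet_setOfPred.1 h

lemma meas_const_and {p : Config d → Prop} (c : Prop) (h : Measurable p) :
    Measurable fun ω => c ∧ p ω := Measurable.and measurable_const h

lemma meas_oadj (x y : V d) : Measurable fun ω : Config d => oadj ω x y := by
  simp_rw [oadj_iff]
  refine Measurable.exists fun i => Measurable.or ?_ ?_
  · exact meas_const_and _ (meas_coord _)
  · exact meas_const_and _ (meas_coord _)

/-- reach in `n` steps -/
def CnN (ω : Config d) (S : Set (V d)) (x : V d) : ℕ → V d → Prop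
  | 0, y => x = y
  | n + 1, y => ∃ z, CnN ω S x n z ∧ (z ∈ S ∧ y ∈ S ∧ oadj ω z y)

lemma Cn_iff_CnN (ω : Config d) (S : Set (V d)) (x y : V d) :
    Cn (oadj ω) S x y ↔ ∃ n, CnN ω S x n y := by
  constructor
  · intro h
    unfold Cn at h
    induction h with
    | refl => exact ⟨0, rfl⟩
    | tail _ h2 ih =>
      obtain ⟨n, hn⟩ := ih
      exact ⟨n + 1, _, hn, h2⟩
  · rintro ⟨n, hn⟩
    induction n generalizing y with
    | zero => rw [show x = y from hn]; exact Cn.refl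
    | succ n ih =>
      obtain ⟨z, h1, h2⟩ := hn
      exact Relation.ReflTransGen.tail (ih z h1) h2

lemma meas_Cn (S : Set (V d)) (x y : V d) :
    Measurable fun ω : Config d => Cn (oadj ω) S x y := by
  simp_rw [Cn_iff_CnN]
  refine Measurable.exists fun n => ?_
  induction n generalizing y with
  | zero => exact measurable_const
  | succ n ih =>
    refine Measurable.exists fun z => (ih z).and ?_
    exact meas_const_and _ (meas_const_and _ (meas_oadj _ _))

lemma meas_Infi (S : Set (V d)) (x : V d) : Measurable fun ω : Config d => Infi ω S x := by
  unfold Infi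
  refine Measurable.forall fun R => Measurable.exists fun y => ?_
  exact (meas_Cn S x y).and measurable_const

lemma meas_memCluster (x : V d) : Measurable fun ω : Config d => memCluster ω x := by
  simp_rw [memCluster_iff]
  exact meas_Infi _ _

lemma measurableSet_cluZero : MeasurableSet (cluZero d) :=
  measurableSet_setOfPred.2 (meas_memCluster 0)

/-! translations -/

lemma Cn_shift_aux {ω : Config d} {w : V d} {S : Set (V d)} {x y : V d}
    (h : Cn (oadj (shift w ω)) S x y) : Cn (oadj ω) {v | v - w ∈ S} (x + w) (y + w) := by
  unfold Cn at h
  induction h with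
  | refl => exact Cn.refl
  | tail _ h2 ih =>
    refine ih.trans (Cn.single ?_ ?_ ((oadj_shift _ _ _ _).1 h2.2.2))
    · simpa using h2.1
    · simpa using h2.2.1

lemma shift_shift (ω : Config d) (x y : V d) : shift x (shift y ω) = shift (x + y) ω := by
  funext b
  simp [shift, add_assoc]

lemma shift_zero (ω : Config d) : shift 0 ω = ω := by
  funext b
  simp [shift]

lemma Cn_shift {ω : Config d} {w : V d} {S : Set (V d)} {x y : V d} :
    Cn (oadj (shift w ω)) S x y ↔ Cn (oadj ω) {v | v - w ∈ S} (x + w) (y + w) := by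
  refine ⟨Cn_shift_aux, fun h => ?_⟩
  have h1 : ω = shift (-w) (shift w ω) := by
    rw [shift_shift]; simp [shift_zero]
  rw [h1] at h
  have := Cn_shift_aux h
  simpa using this

lemma Infi_shift_aux {ω : Config d} {w : V d} {S : Set (V d)} {x : V d}
    (h : Infi (shift w ω) S x) : Infi ω {v | v - w ∈ S} (x + w) := by
  intro R
  obtain ⟨M, hM⟩ := exists_box w
  obtain ⟨y, h1, h2⟩ := h (R + M)
  refine ⟨y + w, Cn_shift.1 h1, fun h3 => h2 ?_⟩
  rw [mem_box] at *
  intro i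
  have := h3 i
  have := hM i
  simp only [Pi.add_apply] at *
  push_cast
  omega

lemma Infi_shift {ω : Config d} {w : V d} {S : Set (V d)} {x : V d} :
    Infi (shift w ω) S x ↔ Infi ω {v | v - w ∈ S} (x + w) := by
  refine ⟨Infi_shift_aux, fun h => ?_⟩
  have h1 : ω = shift (-w) (shift w ω) := by
    rw [shift_shift]; simp [shift_zero]
  rw [h1] at h
  have := Infi_shift_aux h
  simpa using this

lemma Cn_shift_univ {ω : Config d} {w : V d} {x y : V d} :
    Cn (oadj (shift w ω)) Set.univ x y ↔ Cn (oadj ω) Set.univ (x + w) (y + w) := by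
  rw [Cn_shift]; simp

lemma Infi_shift_univ {ω : Config d} {w : V d} {x : V d} :
    Infi (shift w ω) Set.univ x ↔ Infi ω Set.univ (x + w) := by
  rw [Infi_shift]; simp

lemma Infi.of_Cn {ω : Config d} {S : Set (V d)} {x y : V d} (h : Infi ω S x)
    (hxy : Cn (oadj ω) S x y) : Infi ω S y := by
  intro R
  obtain ⟨z, h1, h2⟩ := h R
  exact ⟨z, (hxy.symm (oadj_symm ω)).trans h1, h2⟩

/-! edges inside a box -/

open Classical in
def boxEdges (d R : ℕ) : Finset (EdgeIx d) :=
  ((box d R) ×ˢ Finset.univ).filter fun b => b.1 + unitVec d b.2 ∈ box d R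

lemma mem_boxEdges {R : ℕ} {b : EdgeIx d} :
    b ∈ boxEdges d R ↔ b.1 ∈ box d R ∧ b.1 + unitVec d b.2 ∈ box d R := by
  simp [boxEdges]

lemma box_conn_zero {ω : Config d} {R : ℕ} (h : ∀ b ∈ boxEdges d R, ω b = true) :
    ∀ (n : ℕ) (k : V d), (∑ i, (k i).natAbs) = n → k ∈ box d R →
      Cn (oadj ω) (box d R : Set (V d)) k 0 := by
  intro n
  induction n with
  | zero =>
    intro k hk _
    have : k = 0 := by
      funext i
      have := (Finset.sum_eq_zero_iff.1 hk) i (Finset.mem_univ i)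
      simpa using this
    rw [this]; exact Cn.refl
  | succ n ih =>
    intro k hk hkb
    have : ∃ i, k i ≠ 0 := by
      by_contra hcon
      push Not at hcon
      simp [hcon] at hk
    obtain ⟨i, hi⟩ := this
    have hkb' := mem_box.1 hkb
    have hsum : ∀ k' : V d, (∀ j, j ≠ i → k' j = k j) → (k' i).natAbs + 1 = (k i).natAbs →
        (∑ i, (k' i).natAbs) = n := by
      intro k' h1 h2
      rw [← Finset.add_sum_erase _ _ (Finset.mem_univ i)] at hk ⊢
      have : ∑ x ∈ Finset.univ.erase i, (k' x).natAbs = ∑ x ∈ Finset.univ.erase i, (k x).natAbs :=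
        Finset.sum_congr rfl fun j hj => by rw [h1 j (Finset.ne_of_mem_erase hj)]
      omega
    rcases lt_or_gt_of_ne hi with hneg | hpos
    · set k' := k + unitVec d i with hk'
      have e1 : ∀ j, j ≠ i → k' j = k j := fun j hj => by simp [hk', unitVec, hj]
      have e2 : k' i = k i + 1 := by simp [hk', unitVec]
      have hk'b : k' ∈ box d R := by
        rw [mem_box]; intro j
        by_cases hj : j = i
        · subst hj; have := hkb' j; omega
        · rw [e1 j hj]; exact hkb' j
      refine Cn.trans ?_ (ih k' (hsum k' e1 (by omega)) hk'b)
      refine Cn.single (by simpa using hkb) (by simpa using hk'b) ?_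
      rw [oadj_iff]
      exact ⟨i, Or.inl ⟨hk', h _ (mem_boxEdges.2 ⟨hkb, hk'b⟩)⟩⟩
    · set k' := k - unitVec d i with hk'
      have e1 : ∀ j, j ≠ i → k' j = k j := fun j hj => by simp [hk', unitVec, hj]
      have e2 : k' i = k i - 1 := by simp [hk', unitVec]
      have e3 : k = k' + unitVec d i := by rw [hk']; abel
      have hk'b : k' ∈ box d R := by
        rw [mem_box]; intro j
        by_cases hj : j = i
        · subst hj; have := hkb' j; omega
        · rw [e1 j hj]; exact hkb' j
      refine Cn.trans ?_ (ih k' (hsum k' e1 (by omega)) hk'b)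
      refine Cn.single (by simpa using hkb) (by simpa using hk'b) ?_
      rw [oadj_iff]
      exact ⟨i, Or.inr ⟨e3, h _ (mem_boxEdges.2 ⟨hk'b, e3 ▸ hkb⟩)⟩⟩

lemma box_conn {ω : Config d} {R : ℕ} (h : ∀ b ∈ boxEdges d R, ω b = true) {k k' : V d}
    (hk : k ∈ box d R) (hk' : k' ∈ box d R) : Cn (oadj ω) (box d R : Set (V d)) k k' :=
  (box_conn_zero h _ k rfl hk).trans ((box_conn_zero h _ k' rfl hk').symm (oadj_symm ω))

lemma openUp_open {R : ℕ} (ω : Config d) : ∀ b ∈ boxEdges d R, openUp (boxEdges d R) ω b = true := by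
  intro b hb; simp [openUp, hb]

lemma openUp_mono {R : ℕ} {ω : Config d} {x y : V d} (h : oadj ω x y) :
    oadj (openUp (boxEdges d R) ω) x y := by
  rw [oadj_iff] at *
  obtain ⟨i, ⟨h1, h2⟩ | ⟨h1, h2⟩⟩ := h
  · exact ⟨i, Or.inl ⟨h1, by simp [openUp, h2]⟩⟩
  · exact ⟨i, Or.inr ⟨h1, by simp [openUp, h2]⟩⟩

lemma openUp_off {R : ℕ} {ω : Config d} {x y : V d} (hx : x ∉ box d R)
    (h : oadj (openUp (boxEdges d R) ω) x y) : oadj ω x y := by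
  rw [oadj_iff] at *
  obtain ⟨i, ⟨h1, h2⟩ | ⟨h1, h2⟩⟩ := h
  · have : (x, i) ∉ boxEdges d R := fun h => hx (mem_boxEdges.1 h).1
    exact ⟨i, Or.inl ⟨h1, by simpa [openUp, this] using h2⟩⟩
  · have : (y, i) ∉ boxEdges d R := fun h => hx (by rw [h1]; exact (mem_boxEdges.1 h).2)
    exact ⟨i, Or.inr ⟨h1, by simpa [openUp, this] using h2⟩⟩

/-- an infinite cluster meeting a box has an infinite branch off the box -/
lemma infinite_branch {ω : Config d} {R : ℕ} {x : V d} (hx : x ∈ box d R)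
    (h : Infi ω Set.univ x) :
    ∃ y, y ∉ box d R ∧ Infi ω (box d R : Set (V d))ᶜ y ∧ (∃ k ∈ box d R, oadj ω k y) ∧
      Cn (oadj ω) Set.univ x y := by
  classical
  by_contra hcon
  push Not at hcon
  have h1 : ∀ y : V d, ∃ M : ℕ, ¬ Infi ω (box d R : Set (V d))ᶜ y →
      ∀ z, Cn (oadj ω) (box d R : Set (V d))ᶜ y z → z ∈ box d M := by
    intro y
    by_cases hy : Infi ω (box d R : Set (V d))ᶜ y
    · exact ⟨0, fun h => absurd hy h⟩
    · have hy' := hy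
      unfold Infi at hy'
      push Not at hy'
      obtain ⟨M, hM⟩ := hy'
      exact ⟨M, fun _ => hM⟩
  choose M hM using h1
  obtain ⟨z, hz1, hz2⟩ := h (R + ∑ y ∈ box d (R + 1), M y)
  have hzR : z ∉ box d R := fun h => hz2 (box_mono (by omega) h)
  obtain ⟨u, k, a1, a2, a3, a4, a5⟩ :=
    (hz1.symm (oadj_symm ω)).first_hit (K := (box d R : Set (V d))) (by simpa using hx)
      (by simpa using hzR)
  have hu : u ∉ box d R := by simpa using a2.2
  have hk : k ∈ box d R := by simpa using a3
  have huk : oadj ω k u := oadj_symm _ _ _ a5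
  have hzu : Cn (oadj ω) (box d R : Set (V d))ᶜ u z := by
    refine (a1.mono ?_).symm (oadj_symm ω)
    intro v hv; exact hv.2
  have hxu : Cn (oadj ω) Set.univ x u :=
    hz1.trans ((hzu.mono (Set.subset_univ _)).symm (oadj_symm ω))
  have hnot : ¬ Infi ω (box d R : Set (V d))ᶜ u := fun hI => hcon u hu hI ⟨k, hk, huk⟩ hxu
  have hz3 := hM u hnot z hzu
  have hu1 : u ∈ box d (R + 1) := by
    rw [mem_box] at *
    intro i
    have := oadj_bound huk i
    have := hk i
    push_cast
    omega
  have : M u ≤ ∑ y ∈ box d (R + 1), M y :=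
    Finset.single_le_sum (f := M) (fun _ _ => Nat.zero_le _) hu1
  exact hz2 (box_mono (by omega) hz3)

end Lattice

end SRWPC


namespace SRWPC

section Uniq
variable {d : ℕ}

/-- two distinct infinite clusters -/
def Etwo (d : ℕ) : Set (Config d) :=
  {ω | ∃ x y, Infi ω Set.univ x ∧ Infi ω Set.univ y ∧ ¬ Cn (oadj ω) Set.univ x y}

/-- three distinct infinite clusters -/
def Ethree (d : ℕ) : Set (Config d) :=
  {ω | ∃ t : Fin 3 → V d, (∀ i, Infi ω Set.univ (t i)) ∧
    ∀ i j, i ≠ j → ¬ Cn (oadj ω) Set.univ (t i) (t j)}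

lemma meas_Etwo : MeasurableSet (Etwo d) := by
  refine measurableSet_setOfPred.2 ?_
  refine Measurable.exists fun x => Measurable.exists fun y => ?_
  exact (meas_Infi _ _).and ((meas_Infi _ _).and (meas_Cn _ _ _).not)

lemma meas_Ethree : MeasurableSet (Ethree d) := by
  refine measurableSet_setOfPred.2 ?_
  refine Measurable.exists fun t => ?_
  refine (Measurable.forall fun i => meas_Infi _ _).and ?_
  refine Measurable.forall fun i => Measurable.forall fun j => ?_
  exact measurable_const.imp (meas_Cn _ _ _).not

lemma Etwo_inv (w : V d) : shift w ⁻¹' Etwo d = Etwo d := by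
  ext ω
  simp only [Etwo, Set.mem_preimage, Set.mem_ofPred_eq, Infi_shift_univ, Cn_shift_univ]
  constructor
  · rintro ⟨x, y, h⟩; exact ⟨x + w, y + w, h⟩
  · rintro ⟨x, y, h⟩; exact ⟨x - w, y - w, by simpa using h⟩

lemma Ethree_inv (w : V d) : shift w ⁻¹' Ethree d = Ethree d := by
  ext ω
  simp only [Ethree, Set.mem_preimage, Set.mem_ofPred_eq, Infi_shift_univ, Cn_shift_univ]
  constructor
  · rintro ⟨t, h⟩; exact ⟨fun i => t i + w, h⟩
  · rintro ⟨t, h⟩; exact ⟨fun i => t i - w, by simpa using h⟩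

/-- all infinite clusters meet the box -/
def allMeet (d R : ℕ) : Set (Config d) :=
  {ω | ∀ x, Infi ω Set.univ x → ∃ k ∈ box d R, Cn (oadj ω) Set.univ x k}

lemma allMeet_sub (R : ℕ) : allMeet d R ⊆ openUp (boxEdges d R) ⁻¹' (Etwo d)ᶜ := by
  intro ω hω
  simp only [Set.mem_preimage, Set.mem_compl_iff, Etwo, Set.mem_ofPred_eq]
  rintro ⟨x, y, hx, hy, hxy⟩
  have key : ∀ x, Infi (openUp (boxEdges d R) ω) Set.univ x →
      ∃ k ∈ box d R, Cn (oadj (openUp (boxEdges d R) ω)) Set.univ x k := by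
    intro x hx
    by_contra hcon
    push Not at hcon
    have h1 : ∀ v, Cn (oadj (openUp (boxEdges d R) ω)) Set.univ x v →
        Cn (oadj ω) Set.univ x v := by
      intro v hv
      refine hv.upgrade' (fun _ _ h => h) fun u v hu _ _ huv => ?_
      exact openUp_off (fun hub => hcon u hub hu) huv
    have h2 : Infi ω Set.univ x := by
      intro M
      obtain ⟨y, h3, h4⟩ := hx M
      exact ⟨y, h1 y h3, h4⟩
    obtain ⟨k, hk, hxk⟩ := hω x h2
    exact hcon k hk (hxk.upgrade' (fun _ _ h => h) fun u v _ _ _ huv => openUp_mono huv)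
  obtain ⟨k, hk, hxk⟩ := key x hx
  obtain ⟨k', hk', hyk⟩ := key y hy
  exact hxy ((hxk.trans ((box_conn (openUp_open ω) hk hk').mono (Set.subset_univ _))).trans
    (hyk.symm (oadj_symm _)))

lemma exists_allMeet {ω : Config d} (h2 : ω ∈ Etwo d) (h3 : ω ∉ Ethree d) :
    ∃ R, ω ∈ allMeet d R := by
  obtain ⟨x, y, hx, hy, hxy⟩ := h2
  obtain ⟨R1, hR1⟩ := exists_box x
  obtain ⟨R2, hR2⟩ := exists_box y
  refine ⟨R1 + R2, ?_⟩
  intro z hz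
  by_contra hcon
  push Not at hcon
  have hzx := hcon x (box_mono (by omega) hR1)
  have hzy := hcon y (box_mono (by omega) hR2)
  apply h3
  refine ⟨![x, y, z], ?_, ?_⟩
  · intro i; fin_cases i
    · exact hx
    · exact hy
    · exact hz
  · have sy : ∀ {a b}, ¬ Cn (oadj ω) Set.univ a b → ¬ Cn (oadj ω) Set.univ b a :=
      fun h h' => h (h'.symm (oadj_symm ω))
    intro i j hij
    fin_cases i <;> fin_cases j <;> first | exact absurd rfl hij | skip
    · exact hxy
    · exact sy hzx
    · exact sy hxy
    · exact sy hzy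
    · exact hzx
    · exact hzy

lemma two_imp_three {q : ℝ} {P : Measure (Config d)} (hP : IsBernoulli d q P) (hq : 0 < q)
    (hd : 0 < d) (h : P (Etwo d) ≠ 0) : P (Ethree d) = 1 := by
  have := hP.1
  have h2 : P (Etwo d) = 1 := (zero_one hP hd meas_Etwo Etwo_inv).resolve_left h
  refine (zero_one hP hd meas_Ethree Ethree_inv).resolve_left fun h3 => ?_
  have hc : P (Etwo d)ᶜ = 0 := (prob_compl_eq_zero_iff meas_Etwo).2 h2
  have hR : ∀ R, P (allMeet d R) = 0 := fun R =>
    measure_mono_null (allMeet_sub R) (finite_energy hP hq _ meas_Etwo.compl hc)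
  have hU : P (⋃ R, allMeet d R) = 0 := measure_iUnion_null hR
  have : P (Etwo d) ≤ P (Ethree d ∪ ⋃ R, allMeet d R) := by
    refine measure_mono fun ω hω => ?_
    by_cases h3 : ω ∈ Ethree d
    · exact Or.inl h3
    · obtain ⟨R, hR⟩ := exists_allMeet hω h3
      exact Or.inr (Set.mem_iUnion.2 ⟨R, hR⟩)
  have h5 : P (Ethree d ∪ ⋃ R, allMeet d R) = 0 := measure_union_null h3 hU
  rw [h5, h2] at this
  simp at this

/-- trifurcation event of the box around the origin -/
def TriBox (d R : ℕ) : Set (Config d) :=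
  {ω | (∀ b ∈ boxEdges d R, ω b = true) ∧ ∃ t : Fin 3 → V d,
    (∀ i, t i ∉ box d R ∧ Infi ω (box d R : Set (V d))ᶜ (t i) ∧ ∃ k ∈ box d R, oadj ω k (t i)) ∧
    ∀ i j, i ≠ j → ¬ Cn (oadj ω) (box d R : Set (V d))ᶜ (t i) (t j)}

lemma meas_TriBox (R : ℕ) : MeasurableSet (TriBox d R) := by
  refine measurableSet_setOfPred.2 ?_
  refine Measurable.and ?_ ?_
  · exact Measurable.forall fun b => measurable_const.imp (meas_coord b)
  · refine Measurable.exists fun t => Measurable.and ?_ ?_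
    · refine Measurable.forall fun i => ?_
      refine measurable_const.and ((meas_Infi _ _).and ?_)
      exact Measurable.exists fun k => measurable_const.and (meas_oadj _ _)
    · refine Measurable.forall fun i => Measurable.forall fun j => ?_
      exact measurable_const.imp (meas_Cn _ _ _).not

/-- three infinite clusters meeting the box -/
def EthreeBox (d R : ℕ) : Set (Config d) :=
  {ω | ∃ t : Fin 3 → V d, (∀ i, t i ∈ box d R ∧ Infi ω Set.univ (t i)) ∧
    ∀ i j, i ≠ j → ¬ Cn (oadj ω) Set.univ (t i) (t j)}

lemma Ethree_sub : Ethree d ⊆ ⋃ R, EthreeBox d R := by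
  rintro ω ⟨t, h1, h2⟩
  choose M hM using fun i => exists_box (t i)
  refine Set.mem_iUnion.2 ⟨∑ i, M i, t, fun i => ⟨?_, h1 i⟩, h2⟩
  exact box_mono (Finset.single_le_sum (f := M) (fun _ _ => Nat.zero_le _) (Finset.mem_univ i))
    (hM i)

lemma EthreeBox_sub (R : ℕ) : EthreeBox d R ⊆ openUp (boxEdges d R) ⁻¹' TriBox d R := by
  rintro ω ⟨t, h1, h2⟩
  choose y a1 a2 a3 a4 using fun i => infinite_branch (h1 i).1 (h1 i).2
  have hoff : ∀ u v, Cn (oadj (openUp (boxEdges d R) ω)) (box d R : Set (V d))ᶜ u v →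
      Cn (oadj ω) (box d R : Set (V d))ᶜ u v := by
    intro u v huv
    exact huv.upgrade' (fun _ _ h => h) fun u v _ hu _ huv => openUp_off (by simpa using hu) huv
  have hon : ∀ u v, Cn (oadj ω) (box d R : Set (V d))ᶜ u v →
      Cn (oadj (openUp (boxEdges d R) ω)) (box d R : Set (V d))ᶜ u v := by
    intro u v huv
    exact huv.upgrade' (fun _ _ h => h) fun u v _ hu _ huv => openUp_mono huv
  refine ⟨openUp_open ω, y, fun i => ⟨a1 i, ?_, ?_⟩, ?_⟩
  · intro M
    obtain ⟨z, hz1, hz2⟩ := a2 i M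
    exact ⟨z, hon _ _ hz1, hz2⟩
  · obtain ⟨k, hk, hk'⟩ := a3 i
    exact ⟨k, hk, openUp_mono hk'⟩
  · intro i j hij h
    exact h2 i j hij (((a4 i).trans ((hoff _ _ h).mono (Set.subset_univ _))).trans
      ((a4 j).symm (oadj_symm ω)))

/-- the box translated by `w` -/
def trBox (d R : ℕ) (w : V d) : Set (V d) := {v | v - w ∈ box d R}

lemma count_pointwise (ω : Config d) (R m : ℕ) [DecidablePred fun z : V d =>
      shift ((2 * (R : ℤ) + 1) • z) ω ∈ TriBox d R] :
    ((box d m).filter fun z => shift ((2 * (R : ℤ) + 1) • z) ω ∈ TriBox d R).card ≤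
      ((box d ((2 * R + 1) * m + R + 1)) \ (box d ((2 * R + 1) * m + R))).card := by
  classical
  set n := (2 * R + 1) * m + R with hn
  set W := (box d m).filter fun z => shift ((2 * (R : ℤ) + 1) • z) ω ∈ TriBox d R with hW
  have hsub : ∀ z ∈ box d m, ∀ v ∈ trBox d R ((2 * (R : ℤ) + 1) • z), v ∈ box d n := by
    intro z hz v hv
    have hv' : v - ((2 * (R : ℤ) + 1) • z) ∈ box d R := hv
    rw [mem_box] at *
    intro i
    have h1 := hv' i
    have h2 := hz i
    simp only [Pi.sub_apply, Pi.smul_apply, smul_eq_mul] at h1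
    rw [hn]
    push_cast
    constructor <;> nlinarith
  refine count_tri (oadj_symm ω) (fun z => trBox d R ((2 * (R : ℤ) + 1) • z)) W.card W
    (box d (n + 1) : Set (V d)) _ rfl (Finset.finite_toSet _) ?_ ?_ ?_ ?_
  · intro z hz v hv
    have := hsub z (Finset.mem_filter.1 hz).1 v hv
    exact box_mono (Nat.le_succ _) this
  · intro z _ z' _ hne
    rw [Set.disjoint_left]
    intro v h1 h2
    apply hne
    have h1' : v - ((2 * (R : ℤ) + 1) • z) ∈ box d R := h1
    have h2' : v - ((2 * (R : ℤ) + 1) • z') ∈ box d R := h2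
    rw [mem_box] at h1' h2'
    funext i
    have a1 := h1' i
    have a2 := h2' i
    simp only [Pi.sub_apply, Pi.smul_apply, smul_eq_mul] at a1 a2
    have hR : (0 : ℤ) ≤ R := by positivity
    rcases lt_trichotomy (z i) (z' i) with h | h | h
    · nlinarith
    · exact h
    · nlinarith
  · intro z hz k hk k' hk'
    have hT := (Finset.mem_filter.1 hz).2
    have h1 := box_conn hT.1 hk hk'
    rw [Cn_shift, sub_add_cancel, sub_add_cancel] at h1
    exact h1
  · intro z hz
    obtain ⟨hTo, t, ht, htn⟩ := (Finset.mem_filter.1 hz).2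
    have hzm := (Finset.mem_filter.1 hz).1
    set w := (2 * (R : ℤ) + 1) • z with hw
    set K := trBox d R w with hK
    have hKc : {v : V d | v - w ∈ (box d R : Set (V d))ᶜ} = Kᶜ := by
      ext v; simp [hK, trBox]
    have hbr : ∀ i, ∃ b, b ∈ box d (n + 1) \ box d n ∧ b ∈ (box d (n + 1) : Set (V d)) \ K ∧
        Cn (oadj ω) ((box d (n + 1) : Set (V d)) \ K) (t i + w) b ∧
        ∃ k ∈ K, Cn (oadj ω) (box d (n + 1)) b k := by
      intro i
      obtain ⟨h1, h2, k, hk, hka⟩ := ht i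
      rw [Infi_shift, hKc] at h2
      rw [oadj_shift] at hka
      have hkK : k + w ∈ K := by simpa [hK, trBox] using hk
      have hkn : k + w ∈ box d n := hsub z hzm _ hkK
      have htK : t i + w ∉ K := by simpa [hK, trBox] using h1
      have htn1 : t i + w ∈ box d (n + 1) := by
        rw [mem_box] at *
        intro j
        have := oadj_bound hka j
        have := hkn j
        push_cast
        omega
      obtain ⟨y, hy1, hy2⟩ := h2 (n + 1)
      obtain ⟨b, k1, b1, b2, b3, b4, b5⟩ := hy1.first_hit
        (K := (box d (n + 1) : Set (V d))ᶜ) (by simpa using hy2) (by simpa using htn1)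
      have hset : Kᶜ \ (box d (n + 1) : Set (V d))ᶜ ⊆ (box d (n + 1) : Set (V d)) \ K := by
        intro v hv
        exact ⟨by simpa using hv.2, hv.1⟩
      have hb := hset b2
      have hk1 : k1 ∉ box d (n + 1) := by simpa using b3
      have hbn : b ∉ box d n := by
        intro hbn
        apply hk1
        rw [mem_box] at *
        intro j
        have := oadj_bound b5 j
        have := hbn j
        push_cast
        omega
      refine ⟨b, Finset.mem_sdiff.2 ⟨by simpa using hb.1, hbn⟩, hb, b1.mono hset, k + w, hkK, ?_⟩
      refine (((b1.mono hset).mono Set.sdiff_subset).symm (oadj_symm ω)).trans ?_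
      exact Cn.single (by simpa using htn1) (by simpa using box_mono (Nat.le_succ _) hkn)
        (oadj_symm _ _ _ hka)
    choose b hb1 hb2 hb3 hb4 using hbr
    refine ⟨b, fun i => ⟨by exact_mod_cast hb1 i, hb2 i, hb4 i⟩, fun i j hij h => ?_⟩
    apply htn i j hij
    rw [Cn_shift, hKc]
    refine (((hb3 i).trans h).trans ((hb3 j).symm (oadj_symm ω))).mono ?_
    intro v hv; exact hv.2

lemma count_expect {q : ℝ} {P : Measure (Config d)} (hP : IsBernoulli d q P) (R m : ℕ) :
    ((2 * m + 1 : ℕ) : ℝ) ^ d * P.real (TriBox d R) ≤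
      (((2 * ((2 * R + 1) * m + R) + 3 : ℕ) : ℝ) ^ d -
        ((2 * ((2 * R + 1) * m + R) + 1 : ℕ) : ℝ) ^ d) := by
  classical
  have := hP.1
  set n := (2 * R + 1) * m + R with hn
  have hc : (((box d (n + 1)) \ (box d n)).card : ℝ) =
      ((2 * n + 3 : ℕ) : ℝ) ^ d - ((2 * n + 1 : ℕ) : ℝ) ^ d := by
    rw [Finset.card_sdiff_of_subset (box_mono (Nat.le_succ n)), card_box, card_box, Nat.cast_sub]
    · push_cast; ring
    · exact Nat.pow_le_pow_left (by omega) d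
  have hIntg : ∫ ω, ∑ z ∈ box d m,
      (shift ((2 * (R : ℤ) + 1) • z) ⁻¹' TriBox d R).indicator (fun _ => (1 : ℝ)) ω ∂P =
      ((2 * m + 1 : ℕ) : ℝ) ^ d * P.real (TriBox d R) := by
    rw [integral_finsetSum]
    · have : ∀ z ∈ box d m, ∫ ω,
        (shift ((2 * (R : ℤ) + 1) • z) ⁻¹' TriBox d R).indicator (fun _ => (1 : ℝ)) ω ∂P =
          P.real (TriBox d R) := by
        intro z _
        rw [integral_indicator_const _ (measurable_shift _ (meas_TriBox R))]
        simp only [Measure.real, smul_eq_mul, mul_one]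
        rw [shift_apply hP _ (meas_TriBox R)]
      rw [Finset.sum_congr rfl this, Finset.sum_const, card_box, nsmul_eq_mul]
      push_cast; ring
    · intro z _
      exact (integrable_const (1 : ℝ)).indicator (measurable_shift _ (meas_TriBox R))
  rw [← hIntg, ← hc]
  have hle : ∀ ω, ∑ z ∈ box d m,
      (shift ((2 * (R : ℤ) + 1) • z) ⁻¹' TriBox d R).indicator (fun _ => (1 : ℝ)) ω ≤
      (((box d (n + 1)) \ (box d n)).card : ℝ) := by
    intro ω
    have h1 := count_pointwise ω R m
    have h2 : ∑ z ∈ box d m,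
      (shift ((2 * (R : ℤ) + 1) • z) ⁻¹' TriBox d R).indicator (fun _ => (1 : ℝ)) ω =
      (((box d m).filter fun z => shift ((2 * (R : ℤ) + 1) • z) ω ∈ TriBox d R).card : ℝ) := by
      rw [Finset.card_filter]
      push_cast
      refine Finset.sum_congr rfl fun z _ => ?_
      simp [Set.indicator_apply]
    rw [h2]
    exact_mod_cast h1
  calc _ ≤ ∫ ω, (((box d (n + 1)) \ (box d n)).card : ℝ) ∂P := by
        refine integral_mono ?_ (integrable_const _) hle
        refine integrable_finsetSum _ fun z _ => ?_
        exact (integrable_const (1 : ℝ)).indicator (measurable_shift _ (meas_TriBox R))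
    _ = _ := by simp

lemma TriBox_null {q : ℝ} {P : Measure (Config d)} (hP : IsBernoulli d q P) (R : ℕ) :
    P (TriBox d R) = 0 := by
  have := hP.1
  have hb : ∀ m : ℕ, P.real (TriBox d R) ≤ (2 * (R : ℝ) + 1) ^ d *
      ((1 + 2 / ((2 * R + 1) * (2 * (m : ℝ) + 1))) ^ d - 1) := by
    intro m
    have h := count_expect hP R m
    have e1 : ((2 * ((2 * R + 1) * m + R) + 1 : ℕ) : ℝ) = (2 * R + 1) * (2 * m + 1) := by
      push_cast; ring
    have e2 : ((2 * ((2 * R + 1) * m + R) + 3 : ℕ) : ℝ) = (2 * R + 1) * (2 * m + 1) *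
        (1 + 2 / ((2 * R + 1) * (2 * (m : ℝ) + 1))) := by
      have : (2 * (R : ℝ) + 1) * (2 * m + 1) ≠ 0 := by positivity
      have e : (2 * (R : ℝ) + 1) * (2 * m + 1) * (1 + 2 / ((2 * R + 1) * (2 * (m : ℝ) + 1))) =
          (2 * (R : ℝ) + 1) * (2 * m + 1) + 2 := by
        field_simp
      rw [e]
      push_cast; ring
    rw [e1, e2, mul_pow _ (1 + _), mul_pow (2 * (R : ℝ) + 1)] at h
    push_cast at h
    have hpos : (0 : ℝ) < (2 * (m : ℝ) + 1) ^ d := by positivity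
    refine le_of_mul_le_mul_left ?_ hpos
    calc _ ≤ _ := h
      _ = _ := by ring
  have hlim : Tendsto (fun m : ℕ => (2 * (R : ℝ) + 1) ^ d *
      ((1 + 2 / ((2 * R + 1) * (2 * (m : ℝ) + 1))) ^ d - 1)) atTop (𝓝 0) := by
    have h1 : Tendsto (fun m : ℕ => (2 * (R : ℝ) + 1) * (2 * (m : ℝ) + 1)) atTop atTop := by
      refine Tendsto.const_mul_atTop (by positivity) ?_
      refine tendsto_atTop_add_const_right _ _ ?_
      exact Tendsto.const_mul_atTop (by norm_num) tendsto_natCast_atTop_atTop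
    have h2 := h1.const_div_atTop (2 : ℝ)
    have h3 := ((((tendsto_const_nhds (x := (1 : ℝ))).add h2).pow d).sub_const 1).const_mul
      ((2 * (R : ℝ) + 1) ^ d)
    simpa using h3
  have h0 : P.real (TriBox d R) ≤ 0 := ge_of_tendsto' hlim hb
  have h1 : P.real (TriBox d R) = 0 := le_antisymm h0 measureReal_nonneg
  exact (measureReal_eq_zero_iff (measure_ne_top _ _)).1 h1

/-- Uniqueness of the infinite cluster (Burton–Keane). -/
lemma uniqueness {q : ℝ} {P : Measure (Config d)} (hP : IsBernoulli d q P) (hq : 0 < q)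
    (hd : 0 < d) : P (Etwo d) = 0 := by
  by_contra h
  have h3 := two_imp_three hP hq hd h
  have h4 : ∀ R, P (EthreeBox d R) = 0 := fun R =>
    measure_mono_null (EthreeBox_sub R)
      (finite_energy hP hq _ (meas_TriBox R) (TriBox_null hP R))
  have h5 := measure_mono_null Ethree_sub (measure_iUnion_null h4)
  rw [h3] at h5
  exact one_ne_zero h5

lemma edgeOpen_shift (ω : Config d) (x e : V d) : edgeOpen (shift x ω) 0 e ↔ edgeOpen ω x e := by
  unfold edgeOpen shift
  refine exists_congr fun i => ?_
  have : -unitVec d i + x = x - unitVec d i := by abel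
  simp [this]

/-- Zero-one law for events which are invariant under moves along open edges. -/
lemma cluster_zero_one {q : ℝ} {P : Measure (Config d)} (hP : IsBernoulli d q P) (hq : 0 < q)
    (hd : 0 < d) {A : Set (Config d)} (hA : MeasurableSet A)
    (hinv : ∀ ω ∈ cluZero d, ∀ e ∈ Ud d, edgeOpen ω 0 e → (ω ∈ A ↔ shift e ω ∈ A))
    (hpos : P (cluZero d ∩ A) ≠ 0) : P (cluZero d \ A) = 0 := by
  have := hP.1
  set A' : Set (Config d) := {ω | ∃ x, Infi ω Set.univ x ∧ shift x ω ∈ A} with hA'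
  have hm : MeasurableSet A' := by
    refine measurableSet_setOfPred.2 (Measurable.exists fun x => (meas_Infi _ _).and ?_)
    exact measurableSet_setOfPred.1 (measurable_shift x hA)
  have hi : ∀ w, shift w ⁻¹' A' = A' := by
    intro w
    ext ω
    simp only [hA', Set.mem_preimage, Set.mem_ofPred_eq, Infi_shift_univ, shift_shift]
    constructor
    · rintro ⟨x, h⟩; exact ⟨x + w, h⟩
    · rintro ⟨x, h⟩; exact ⟨x - w, by simpa using h⟩
  have h1 : P A' = 1 := by
    refine (zero_one hP hd hm hi).resolve_left fun h0 => hpos (measure_mono_null ?_ h0)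
    rintro ω ⟨h1, h2⟩
    exact ⟨0, memCluster_iff.1 h1, by rwa [shift_zero]⟩
  have hc : P A'ᶜ = 0 := (prob_compl_eq_zero_iff hm).2 h1
  refine measure_mono_null (t := A'ᶜ ∪ Etwo d) ?_ (measure_union_null hc (uniqueness hP hq hd))
  rintro ω ⟨h0, hωA⟩
  by_contra hcon
  simp only [Set.mem_union, Set.mem_compl_iff, not_or, not_not] at hcon
  obtain ⟨⟨x, hx, hxA⟩, h2⟩ := hcon
  have h0' : Infi ω Set.univ 0 := memCluster_iff.1 h0
  have hC : Cn (oadj ω) Set.univ 0 x := by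
    by_contra h
    exact h2 ⟨0, x, h0', hx, h⟩
  have key : ∀ y, Cn (oadj ω) Set.univ 0 y → (ω ∈ A ↔ shift y ω ∈ A) := by
    intro y hy
    unfold Cn at hy
    induction hy with
    | refl => rw [shift_zero]
    | @tail u v h3 h4 ih =>
      have hu : shift u ω ∈ cluZero d := by
        change memCluster _ _
        rw [memCluster_iff, Infi_shift_univ, zero_add]
        exact h0'.of_Cn h3
      have := hinv (shift u ω) hu (v - u) h4.2.2.1 ((edgeOpen_shift _ _ _).2 h4.2.2.2)
      rw [shift_shift, sub_add_cancel] at this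
      rw [ih, this]
  exact hωA ((key x hC).2 hxA)

end Uniq

end SRWPC


namespace SRWPC

section Walk
variable {d : ℕ}

lemma shift_mem_cluZero {ω : Config d} (h : ω ∈ cluZero d) {e : V d} (he : e ∈ Ud d)
    (ho : edgeOpen ω 0 e) : shift e ω ∈ cluZero d := by
  have h0 : Infi ω Set.univ 0 := memCluster_iff.1 h
  change memCluster _ _
  rw [memCluster_iff, Infi_shift_univ, zero_add]
  refine h0.of_Cn (Cn.single trivial trivial ⟨?_, ?_⟩)
  · simpa using he
  · simpa using ho

lemma neg_open {ω : Config d} {e : V d} (he : e ∈ Ud d)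
    (ho : edgeOpen ω 0 e) : -e ∈ Ud d ∧ edgeOpen (shift e ω) 0 (-e) := by
  have h : oadj ω 0 e := ⟨by simpa using he, by simpa using ho⟩
  have h2 := oadj_symm _ _ _ h
  rw [edgeOpen_shift]
  simpa [oadj] using h2

lemma exists_open {ω : Config d} (h : ω ∈ cluZero d) : ∃ e ∈ Ud d, edgeOpen ω 0 e := by
  have h0 : Infi ω Set.univ 0 := memCluster_iff.1 h
  obtain ⟨y, h1, h2⟩ := h0 0
  unfold Cn at h1
  rcases Relation.ReflTransGen.cases_head h1 with h3 | ⟨z, h3, _⟩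
  · exact absurd (by rw [← h3, mem_box]; simp) h2
  · refine ⟨z, ?_⟩
    have := h3.2.2
    simpa [oadj] using this

lemma srw_nonneg (ω : Config d) (e : Step d) : 0 ≤ srw d ω e := by
  unfold srw trans
  split_ifs <;> positivity

lemma openDeg_pos {ω : Config d} (h : ω ∈ cluZero d) : 0 < openDeg ω 0 := by
  classical
  obtain ⟨e, he, ho⟩ := exists_open h
  unfold openDeg
  exact Finset.card_pos.2 ⟨e, Finset.mem_filter.2 ⟨he, ho⟩⟩

lemma openDeg_le (ω : Config d) : openDeg ω 0 ≤ (Ud d).card := by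
  classical
  unfold openDeg
  exact Finset.card_filter_le _ _

lemma srw_pos_iff {ω : Config d} (h : ω ∈ cluZero d) (e : Step d) :
    0 < srw d ω e ↔ edgeOpen ω 0 e.1 := by
  have := openDeg_pos h
  unfold srw trans
  split_ifs with h1
  · simp [h1, this]
  · simp [h1]

lemma srw_ge {ω : Config d} (h : ω ∈ cluZero d) (e : Step d) (ho : edgeOpen ω 0 e.1) :
    1 / ((Ud d).card : ℝ) ≤ srw d ω e := by
  have := openDeg_pos h
  have h2 := openDeg_le ω
  unfold srw trans
  rw [if_pos ho]
  gcongr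

lemma srw_sum {ω : Config d} (h : ω ∈ cluZero d) : ∑ e : Step d, srw d ω e = 1 := by
  classical
  have := openDeg_pos h
  unfold srw trans
  rw [Finset.sum_coe_sort (Ud d) (fun e => if edgeOpen ω 0 e then 1 / (openDeg ω 0 : ℝ) else 0)]
  rw [← Finset.sum_filter, Finset.sum_const, nsmul_eq_mul]
  have h3 : (((Ud d).filter (fun e => edgeOpen ω 0 e)).card : ℝ) = openDeg ω 0 := by
    unfold openDeg
    congr!
  rw [h3]
  field_simp

lemma meas_edgeOpen (e : V d) (he : e ∈ Ud d) : Measurable fun ω : Config d => edgeOpen ω 0 e := by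
  have := meas_oadj (d := d) 0 e
  simpa [oadj, he] using this

lemma measurable_srw (e : Step d) : Measurable fun ω : Config d => srw d ω e := by
  classical
  unfold srw trans
  refine Measurable.ite (measurableSet_setOfPred.2 (meas_edgeOpen _ e.2)) ?_ measurable_const
  refine measurable_const.div ?_
  have : (fun ω : Config d => (openDeg ω 0 : ℝ)) =
      fun ω => ∑ e ∈ Ud d, if edgeOpen ω 0 e then (1 : ℝ) else 0 := by
    funext ω
    unfold openDeg
    rw [Finset.sum_ite]
    simp
  rw [this]
  refine Finset.measurable_sum _ fun e he => ?_
  exact Measurable.ite (measurableSet_setOfPred.2 (meas_edgeOpen _ he)) measurable_const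
    measurable_const

/-- The exponential moment. -/
def Zn (f : EnvSp d → ℝ) (n : ℕ) (ω : Config d) : ℝ :=
  qE (srw d) ω (fun s : Fin n → Step d => Real.exp (∑ k : Fin n, f (envPair ω s k)))

lemma pos_zero {n : ℕ} (s : Fin n → Step d) : pos s 0 = 0 := by
  simp [pos]

lemma pos_cons {n : ℕ} (e : Step d) (s : Fin n → Step d) (k : ℕ) :
    pos (Fin.cons e s : Fin (n + 1) → Step d) (k + 1) = pos s k + e.1 := by
  unfold pos
  rw [Finset.sum_filter, Finset.sum_filter, Fin.sum_univ_succ]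
  simp [add_comm]

lemma Zn_zero (f : EnvSp d → ℝ) (ω : Config d) : Zn f 0 ω = 1 := by
  simp [Zn, qE, pathProb]

lemma Zn_succ (f : EnvSp d → ℝ) (n : ℕ) (ω : Config d) :
    Zn f (n + 1) ω = ∑ e : Step d, srw d ω e * (Real.exp (f (ω, e)) * Zn f n (shift e.1 ω)) := by
  unfold Zn qE
  rw [← (Fin.consEquiv (fun _ : Fin (n + 1) => Step d)).sum_comp, Fintype.sum_prod_type]
  refine Finset.sum_congr rfl fun e _ => ?_
  rw [Finset.mul_sum, Finset.mul_sum]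
  refine Finset.sum_congr rfl fun s _ => ?_
  have hc : (Fin.consEquiv (fun _ : Fin (n + 1) => Step d)) (e, s) =
    (Fin.cons e s : Fin (n + 1) → Step d) := rfl
  have h0 : envPair ω (Fin.cons e s : Fin (n + 1) → Step d) 0 = (ω, e) := by
    simp [envPair, pos_zero, shift_zero]
  have hs : ∀ k : Fin n, envPair ω (Fin.cons e s : Fin (n + 1) → Step d) k.succ =
      envPair (shift e.1 ω) s k := by
    intro k
    simp [envPair, pos_cons, shift_shift]
  have hp : pathProb (srw d) ω (Fin.cons e s : Fin (n + 1) → Step d) =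
      srw d ω e * pathProb (srw d) (shift e.1 ω) s := by
    unfold pathProb
    rw [Fin.prod_univ_succ]
    simp [pos_zero, shift_zero, pos_cons, shift_shift]
  rw [hc, hp]
  beta_reduce
  rw [Fin.sum_univ_succ, h0, Real.exp_add]
  simp_rw [hs]
  ring

lemma measurable_Zn {f : EnvSp d → ℝ} (hf : Measurable f) (n : ℕ) : Measurable (Zn f n) := by
  induction n with
  | zero =>
    have : Zn f 0 = fun _ => 1 := funext (Zn_zero f)
    rw [this]; exact measurable_const
  | succ n ih =>
    have : Zn f (n + 1) = fun ω => ∑ e : Step d, srw d ω e *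
        (Real.exp (f (ω, e)) * Zn f n (shift e.1 ω)) := funext (Zn_succ f n)
    rw [this]
    refine Finset.measurable_sum _ fun e _ => (measurable_srw e).mul (Measurable.mul ?_ ?_)
    · exact Real.measurable_exp.comp (hf.comp (measurable_id.prodMk measurable_const))
    · exact ih.comp (measurable_shift e.1)

lemma Zn_bounds {f : EnvSp d → ℝ} {C : ℝ} (hC : ∀ q, |f q| ≤ C) (n : ℕ) :
    ∀ ω ∈ cluZero d, Real.exp (-(n * C)) ≤ Zn f n ω ∧ Zn f n ω ≤ Real.exp (n * C) := by
  induction n with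
  | zero => intro ω _; simp [Zn_zero]
  | succ n ih =>
    intro ω hω
    rw [Zn_succ]
    have key : ∀ e : Step d,
        srw d ω e * Real.exp (-((n + 1 : ℕ) * C)) ≤
          srw d ω e * (Real.exp (f (ω, e)) * Zn f n (shift e.1 ω)) ∧
        srw d ω e * (Real.exp (f (ω, e)) * Zn f n (shift e.1 ω)) ≤
          srw d ω e * Real.exp ((n + 1 : ℕ) * C) := by
      intro e
      by_cases ho : edgeOpen ω 0 e.1
      · obtain ⟨h1, h2⟩ := ih _ (shift_mem_cluZero hω e.2 ho)
        have h3 := abs_le.1 (hC (ω, e))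
        have h4 : -((n + 1 : ℕ) * C) = -C + -(n * C) := by push_cast; ring
        have h5 : ((n + 1 : ℕ) * C) = C + (n * C) := by push_cast; ring
        have h6 : 0 ≤ Zn f n (shift e.1 ω) := (Real.exp_pos _).le.trans h1
        rw [h4, h5, Real.exp_add, Real.exp_add]
        have h7 := srw_nonneg ω e
        constructor
        · gcongr
          exact h3.1
        · gcongr
          exact h3.2
      · have : srw d ω e = 0 := by
          have := (srw_pos_iff hω e).not.2 ho
          exact le_antisymm (not_lt.1 this) (srw_nonneg ω e)
        simp [this]
    have hs := srw_sum hω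
    constructor
    · calc _ = ∑ e : Step d, srw d ω e * Real.exp (-((n + 1 : ℕ) * C)) := by
            rw [← Finset.sum_mul, hs, one_mul]
        _ ≤ _ := Finset.sum_le_sum fun e _ => (key e).1
    · calc _ ≤ ∑ e : Step d, srw d ω e * Real.exp ((n + 1 : ℕ) * C) :=
            Finset.sum_le_sum fun e _ => (key e).2
        _ = _ := by rw [← Finset.sum_mul, hs, one_mul]

lemma Zn_pos {f : EnvSp d → ℝ} {C : ℝ} (hC : ∀ q, |f q| ≤ C) (n : ℕ) {ω : Config d}
    (h : ω ∈ cluZero d) : 0 < Zn f n ω :=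
  (Real.exp_pos _).trans_le (Zn_bounds hC n ω h).1

/-- log moment -/
def un (f : EnvSp d → ℝ) (n : ℕ) (ω : Config d) : ℝ := Real.log (Zn f n ω)

lemma un_abs {f : EnvSp d → ℝ} {C : ℝ} (hC : ∀ q, |f q| ≤ C) (n : ℕ) {ω : Config d}
    (h : ω ∈ cluZero d) : |un f n ω| ≤ n * C := by
  obtain ⟨h1, h2⟩ := Zn_bounds hC n ω h
  have h3 := Zn_pos hC n h
  rw [abs_le]
  exact ⟨(Real.le_log_iff_exp_le h3).2 h1, (Real.log_le_iff_le_exp h3).2 h2⟩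

lemma srw_nonneg_mul {f : EnvSp d → ℝ} {C : ℝ} (hC : ∀ q, |f q| ≤ C) (n : ℕ) {ω : Config d}
    (h : ω ∈ cluZero d) (e : Step d) :
    0 ≤ srw d ω e * (Real.exp (f (ω, e)) * Zn f n (shift e.1 ω)) := by
  by_cases ho : edgeOpen ω 0 e.1
  · have := Zn_pos hC n (shift_mem_cluZero h e.2 ho)
    have := srw_nonneg ω e
    positivity
  · have : srw d ω e = 0 :=
      le_antisymm (not_lt.1 ((srw_pos_iff h e).not.2 ho)) (srw_nonneg ω e)
    simp [this]

lemma un_step {f : EnvSp d → ℝ} {C : ℝ} (hC : ∀ q, |f q| ≤ C) (n : ℕ) {ω : Config d}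
    (h : ω ∈ cluZero d) {e : V d} (he : e ∈ Ud d) (ho : edgeOpen ω 0 e) :
    un f n (shift e ω) - (C + Real.log (Ud d).card) ≤ un f (n + 1) ω := by
  set e' : Step d := ⟨e, he⟩
  have hz := Zn_pos hC n (shift_mem_cluZero h he ho)
  have hcard : (0 : ℝ) < (Ud d).card := by exact_mod_cast Finset.card_pos.2 ⟨e, he⟩
  have h1 : 1 / ((Ud d).card : ℝ) * (Real.exp (-C) * Zn f n (shift e ω)) ≤ Zn f (n + 1) ω := by
    rw [Zn_succ]
    calc _ ≤ srw d ω e' * (Real.exp (f (ω, e')) * Zn f n (shift e'.1 ω)) := by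
          have := srw_ge h e' ho
          have h4 := srw_nonneg ω e'
          have h3 := (abs_le.1 (hC (ω, e'))).1
          gcongr
        _ ≤ _ := Finset.single_le_sum (f := fun e : Step d =>
            srw d ω e * (Real.exp (f (ω, e)) * Zn f n (shift e.1 ω)))
            (fun e _ => srw_nonneg_mul hC n h e) (Finset.mem_univ e')
  have h2 := Real.log_le_log (by positivity) h1
  rw [Real.log_mul (by positivity) (by positivity), Real.log_mul (by positivity) hz.ne',
    Real.log_exp, one_div, Real.log_inv] at h2
  unfold un
  linarith

/-- Gibbs variational inequality. -/
lemma gibbs {ι : Type*} [Fintype ι] {π r a : ι → ℝ} (hπ : ∀ e, 0 ≤ π e) (hr : ∀ e, 0 ≤ r e)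
    (hrs : ∑ e, r e = 1) (h0 : ∀ e, 0 < r e → 0 < π e) (ha : ∀ e, 0 < π e → 0 < a e) :
    ∑ e, r e * (Real.log (a e) - Real.log (r e / π e)) ≤ Real.log (∑ e, π e * a e) := by
  set S := ∑ e, π e * a e with hS
  have hnn : ∀ e, 0 ≤ π e * a e := by
    intro e
    rcases (hπ e).eq_or_lt with h | h
    · simp [← h]
    · exact (mul_pos h (ha e h)).le
  have hSpos : 0 < S := by
    have : ∃ e, 0 < r e := by
      by_contra hcon
      push Not at hcon
      have : ∑ e, r e ≤ 0 := Finset.sum_nonpos fun e _ => hcon e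
      linarith
    obtain ⟨e, he⟩ := this
    exact Finset.sum_pos' (fun e _ => hnn e) ⟨e, Finset.mem_univ e, mul_pos (h0 e he) (ha e (h0 e he))⟩
  have key : ∀ e, r e * (Real.log (a e) - Real.log (r e / π e)) - r e * Real.log S ≤
      π e * a e / S - r e := by
    intro e
    rcases (hr e).eq_or_lt with h | h
    · simp only [← h, zero_mul, sub_zero]
      exact div_nonneg (hnn e) hSpos.le
    · have hp := h0 e h
      have hae := ha e hp
      have h1 := Real.log_le_sub_one_of_pos (x := π e * a e / (r e * S)) (by positivity)
      rw [Real.log_div (by positivity) (by positivity), Real.log_mul hp.ne' hae.ne',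
        Real.log_mul h.ne' hSpos.ne'] at h1
      rw [Real.log_div h.ne' hp.ne']
      have h2 := mul_le_mul_of_nonneg_left h1 h.le
      have h3 : r e * (π e * a e / (r e * S) - 1) = π e * a e / S - r e := by
        field_simp
      rw [h3] at h2
      linarith
  have := Finset.sum_le_sum fun e (_ : e ∈ Finset.univ) => key e
  rw [Finset.sum_sub_distrib, Finset.sum_sub_distrib, ← Finset.sum_mul, ← Finset.sum_div, hrs,
    ← hS, div_self hSpos.ne'] at this
  linarith

end Walk

end SRWPC


namespace SRWPC

section Maximal
variable {X ι : Type*} [MeasurableSpace X] [Fintype ι]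

/-- running maximum -/
def runMax (h : ℕ → X → ℝ) : ℕ → X → ℝ
  | 0 => fun _ => 0
  | N + 1 => fun x => max (runMax h N x) (h (N + 1) x)

lemma runMax_nonneg (h : ℕ → X → ℝ) (N : ℕ) (x : X) : 0 ≤ runMax h N x := by
  induction N with
  | zero => exact le_rfl
  | succ N ih => exact ih.trans (le_max_left _ _)

lemma runMax_mono (h : ℕ → X → ℝ) (x : X) : Monotone fun N => runMax h N x :=
  monotone_nat_of_le_succ fun _ => le_max_left _ _

lemma le_runMax (h : ℕ → X → ℝ) (h0 : ∀ x, h 0 x = 0) {n N : ℕ} (hn : n ≤ N) (x : X) :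
    h n x ≤ runMax h N x := by
  refine le_trans ?_ (runMax_mono h x hn)
  cases n with
  | zero => rw [h0]; exact runMax_nonneg h _ x
  | succ n => exact le_max_right _ _

lemma runMax_eq (h : ℕ → X → ℝ) (N : ℕ) (x : X) (hpos : 0 < runMax h N x) :
    ∃ n, n + 1 ≤ N ∧ runMax h N x = h (n + 1) x := by
  induction N with
  | zero => exact absurd hpos (lt_irrefl _)
  | succ N ih =>
    by_cases hle : runMax h N x ≤ h (N + 1) x
    · exact ⟨N, le_rfl, max_eq_right hle⟩
    · have he : runMax h (N + 1) x = runMax h N x := max_eq_left (not_le.1 hle).le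
      rw [he] at hpos ⊢
      obtain ⟨n, h1, h2⟩ := ih hpos
      exact ⟨n, by omega, h2⟩

lemma runMax_meas {h : ℕ → X → ℝ} (hm : ∀ n, Measurable (h n)) (N : ℕ) :
    Measurable (runMax h N) := by
  induction N with
  | zero => exact measurable_const
  | succ N ih => exact ih.max (hm _)

lemma runMax_int {Q : Measure X} {h : ℕ → X → ℝ} (hm : ∀ n, Integrable (h n) Q) (N : ℕ) :
    Integrable (runMax h N) Q := by
  induction N with
  | zero => exact integrable_zero _ _ _
  | succ N ih => exact ih.sup (hm _)

/-- Superadditive maximal inequality and its consequence. -/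
lemma max_lim {Q : Measure X} [IsProbabilityMeasure Q] {u : ℕ → X → ℝ} {g : X → ℝ}
    {sh : ι → X → X} {r : ι → X → ℝ} {c : ℝ}
    (hum : ∀ n, Measurable (u n)) (hui : ∀ n, Integrable (u n) Q) (hu0 : ∀ x, u 0 x = 0)
    (hg : Integrable g Q) (hr : ∀ e x, 0 ≤ r e x)
    (hrs : ∀ᵐ x ∂Q, ∑ e, r e x = 1)
    (hinv : ∀ F : X → ℝ, Measurable F → Integrable F Q →
      Integrable (fun x => ∑ e, r e x * F (sh e x)) Q ∧
      ∫ x, ∑ e, r e x * F (sh e x) ∂Q = ∫ x, F x ∂Q)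
    (hstep : ∀ n, ∀ᵐ x ∂Q, g x + ∑ e, r e x * u n (sh e x) ≤ u (n + 1) x)
    (hex : ∀ᵐ x ∂Q, ∃ n : ℕ, u n x < c * n) : ∫ x, g x ∂Q ≤ c := by
  set h : ℕ → X → ℝ := fun n x => c * n - u n x with hh
  have h0 : ∀ x, h 0 x = 0 := fun x => by simp [hh, hu0]
  have hm : ∀ n, Measurable (h n) := fun n => measurable_const.sub (hum n)
  have hi : ∀ n, Integrable (h n) Q := fun n => (integrable_const _).sub (hui n)
  set S : ℕ → Set X := fun N => {x | 0 < runMax h N x} with hS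
  have hSm : ∀ N, MeasurableSet (S N) := fun N => measurableSet_lt measurable_const (runMax_meas hm N)
  have hcg : Integrable (fun x => c - g x) Q := (integrable_const _).sub hg
  have hkey : ∀ N, 0 ≤ ∫ x in S N, (c - g x) ∂Q := by
    intro N
    obtain ⟨i1, i2⟩ := hinv _ (runMax_meas hm N) (runMax_int hi N)
    have hle : ∀ᵐ x ∂Q, runMax h N x ≤ (S N).indicator (fun x => c - g x) x +
        ∑ e, r e x * runMax h N (sh e x) := by
      filter_upwards [ae_all_iff.2 hstep, hrs] with x hx hx1
      have hRn : 0 ≤ ∑ e, r e x * runMax h N (sh e x) :=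
        Finset.sum_nonneg fun e _ => mul_nonneg (hr e x) (runMax_nonneg h N _)
      by_cases hp : 0 < runMax h N x
      · rw [Set.indicator_of_mem (show x ∈ S N from hp)]
        obtain ⟨n, hn, he⟩ := runMax_eq h N x hp
        have h1 : ∑ e, r e x * h n (sh e x) ≤ ∑ e, r e x * runMax h N (sh e x) :=
          Finset.sum_le_sum fun e _ => mul_le_mul_of_nonneg_left
            (le_runMax h h0 (by omega) _) (hr e x)
        have h2 : ∑ e, r e x * h n (sh e x) = c * n - ∑ e, r e x * u n (sh e x) := by
          simp only [hh, mul_sub, Finset.sum_sub_distrib, ← Finset.sum_mul, hx1, one_mul]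
        have h3 := hx n
        rw [he]
        simp only [hh] at h1 h2 ⊢
        push_cast
        linarith
      · rw [Set.indicator_of_notMem (show x ∉ S N from hp)]
        linarith
    have h4 := integral_mono_ae (runMax_int hi N) ((hcg.indicator (hSm N)).add i1) hle
    have h5 : ∫ x, ((S N).indicator (fun x => c - g x) + fun x =>
        ∑ e, r e x * runMax h N (sh e x)) x ∂Q = ∫ x in S N, (c - g x) ∂Q +
        ∫ x, runMax h N x ∂Q := by
      rw [integral_add' (hcg.indicator (hSm N)) i1, i2, integral_indicator (hSm N)]
    rw [h5] at h4
    linarith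
  have hmono : Monotone S := fun a b hab x hx => lt_of_lt_of_le hx (runMax_mono h x hab)
  have hlim := tendsto_setIntegral_of_monotone hSm hmono (hcg.integrableOn (s := ⋃ n, S n))
  have h6 : 0 ≤ ∫ x in ⋃ n, S n, (c - g x) ∂Q := ge_of_tendsto' hlim hkey
  have h7 : (⋃ n, S n) =ᵐ[Q] Set.univ := by
    rw [eventuallyEq_univ]
    filter_upwards [hex] with x ⟨n, hn⟩
    refine Set.mem_iUnion.2 ⟨n, ?_⟩
    change 0 < runMax h n x
    refine lt_of_lt_of_le ?_ (le_runMax h h0 le_rfl x)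
    simp only [hh]; linarith
  rw [setIntegral_congr_set h7, setIntegral_univ, integral_sub (integrable_const _) hg] at h6
  simpa using h6

end Maximal

end SRWPC


namespace SRWPC

section Decomp
variable {d : ℕ}

lemma measurable_pairing_shift : Measurable fun q : EnvSp d => shift q.2.1 q.1 :=
  measurable_from_prod_countable_left fun e => measurable_shift e.1

lemma slice_apply (μ : Measure (EnvSp d)) (e : Step d) {B : Set (Config d)}
    (hB : MeasurableSet B) : slice μ e B = μ {q | q.1 ∈ B ∧ q.2 = e} := by
  unfold slice
  rw [Measure.map_apply measurable_fst hB, Measure.restrict_apply (measurable_fst hB)]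
  congr 1
  ext q
  simp

lemma decomp (μ : Measure (EnvSp d)) :
    μ = ∑ e : Step d, (slice μ e).map (fun ω => (ω, e)) := by
  classical
  ext A hA
  have hm : ∀ e : Step d, Measurable fun ω : Config d => (ω, e) := fun e =>
    measurable_id.prodMk measurable_const
  rw [Measure.finsetSum_apply]
  have h1 : ∀ e : Step d, (slice μ e).map (fun ω => (ω, e)) A = μ (A ∩ {q | q.2 = e}) := by
    intro e
    rw [Measure.map_apply (hm e) hA, slice_apply _ _ (hm e hA)]
    congr 1
    ext ⟨ω, e'⟩
    simp only [Set.mem_preimage, Set.mem_ofPred_eq, Set.mem_inter_iff]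
    constructor
    · rintro ⟨h, rfl⟩; exact ⟨h, rfl⟩
    · rintro ⟨h, rfl⟩; exact ⟨h, rfl⟩
  simp_rw [h1]
  rw [← measure_biUnion_finset]
  · congr 1
    ext q
    simp
  · intro a _ b _ hab
    refine Set.disjoint_left.2 fun q h1 h2 => hab ?_
    exact h1.2.symm.trans h2.2
  · intro e _
    exact hA.inter (measurable_snd (measurableSet_singleton e))

variable {μ : Measure (EnvSp d)} {ρ : Step d → Config d → ℝ≥0∞}

lemma lint_decomp (hρ : ∀ e, Measurable (ρ e))
    (hs : ∀ e, slice μ e = (marg1 μ).withDensity (ρ e)) {F : EnvSp d → ℝ≥0∞} (hF : Measurable F) :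
    ∫⁻ q, F q ∂μ = ∑ e : Step d, ∫⁻ ω, ρ e ω * F (ω, e) ∂(marg1 μ) := by
  have hm : ∀ e : Step d, Measurable fun ω : Config d => (ω, e) := fun e =>
    measurable_id.prodMk measurable_const
  conv_lhs => rw [decomp μ]
  rw [lintegral_finsetSum_measure]
  refine Finset.sum_congr rfl fun e _ => ?_
  rw [lintegral_map hF (hm e), hs]
  exact lintegral_withDensity_eq_lintegral_mul _ (hρ e) (hF.comp (hm e))

lemma rho_sum [IsProbabilityMeasure μ] (hρ : ∀ e, Measurable (ρ e))
    (hs : ∀ e, slice μ e = (marg1 μ).withDensity (ρ e)) :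
    ∀ᵐ ω ∂(marg1 μ), ∑ e, ρ e ω = 1 := by
  have hQ : IsProbabilityMeasure (marg1 μ) :=
    Measure.isProbabilityMeasure_map measurable_fst.aemeasurable
  refine ae_eq_of_forall_setLIntegral_eq_of_sigmaFinite (μ := marg1 μ)
    (Finset.measurable_sum _ fun e _ => hρ e) measurable_const fun A hA _ => ?_
  have h1 := lint_decomp (F := fun q => A.indicator 1 q.1) hρ hs
    ((measurable_one.indicator hA).comp measurable_fst)
  have h2 : ∫⁻ q, A.indicator (1 : Config d → ℝ≥0∞) q.1 ∂μ = marg1 μ A := by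
    rw [← lintegral_indicator_one hA]
    unfold marg1
    rw [lintegral_map (measurable_one.indicator hA) measurable_fst]
  rw [h2] at h1
  rw [lintegral_finsetSum _ fun e _ => hρ e]
  simp only [lintegral_const, Measure.restrict_apply_univ, one_mul]
  rw [h1]
  refine Finset.sum_congr rfl fun e _ => ?_
  rw [← lintegral_indicator hA]
  refine lintegral_congr fun ω => ?_
  by_cases h : ω ∈ A <;> simp [h]

lemma int_decomp [IsProbabilityMeasure μ] (hρ : ∀ e, Measurable (ρ e))
    (hs : ∀ e, slice μ e = (marg1 μ).withDensity (ρ e)) {F : EnvSp d → ℝ} (hF : Measurable F)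
    (hFi : Integrable F μ) :
    (∀ e, Integrable (fun ω => (ρ e ω).toReal * F (ω, e)) (marg1 μ)) ∧
    ∫ q, F q ∂μ = ∫ ω, ∑ e : Step d, (ρ e ω).toReal * F (ω, e) ∂(marg1 μ) := by
  have hm : ∀ e : Step d, Measurable fun ω : Config d => (ω, e) := fun e =>
    measurable_id.prodMk measurable_const
  have hfin : ∀ e, ∀ᵐ ω ∂(marg1 μ), ρ e ω < ∞ := by
    intro e
    filter_upwards [rho_sum hρ hs] with ω h
    refine lt_of_le_of_lt (Finset.single_le_sum (f := fun e => ρ e ω) (fun _ _ => zero_le)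
      (Finset.mem_univ e)) ?_
    rw [h]; exact ENNReal.one_lt_top
  have h1 : ∀ e, Integrable F ((slice μ e).map (fun ω => (ω, e))) := by
    have := hFi
    rw [decomp μ, integrable_finsetSum_measure] at this
    exact fun e => this e (Finset.mem_univ e)
  have h2 : ∀ e, Integrable (fun ω => (ρ e ω).toReal * F (ω, e)) (marg1 μ) := by
    intro e
    have := h1 e
    rw [integrable_map_measure hF.aestronglyMeasurable (hm e).aemeasurable, hs,
      integrable_withDensity_iff_integrable_smul' (hρ e) (hfin e)] at this
    exact this
  refine ⟨h2, ?_⟩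
  rw [integral_finsetSum _ fun e _ => h2 e]
  conv_lhs => rw [decomp μ]
  rw [integral_finsetSum_measure fun e _ => h1 e]
  refine Finset.sum_congr rfl fun e _ => ?_
  rw [integral_map (hm e).aemeasurable hF.aestronglyMeasurable, hs,
    integral_withDensity_eq_integral_toReal_smul (hρ e) (hfin e)]
  rfl

lemma inv_decomp [IsProbabilityMeasure μ] (hρ : ∀ e, Measurable (ρ e))
    (hs : ∀ e, slice μ e = (marg1 μ).withDensity (ρ e)) (hinv : marg1 μ = marg2 μ)
    (F : Config d → ℝ) (hF : Measurable F) (hFi : Integrable F (marg1 μ)) :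
    Integrable (fun ω => ∑ e : Step d, (ρ e ω).toReal * F (shift e.1 ω)) (marg1 μ) ∧
    ∫ ω, ∑ e : Step d, (ρ e ω).toReal * F (shift e.1 ω) ∂(marg1 μ) = ∫ ω, F ω ∂(marg1 μ) := by
  have hsm := measurable_pairing_shift (d := d)
  have hi : Integrable (fun q : EnvSp d => F (shift q.2.1 q.1)) μ := by
    rw [hinv] at hFi
    exact (integrable_map_measure hF.aestronglyMeasurable hsm.aemeasurable).1 hFi
  obtain ⟨h1, h2⟩ := int_decomp hρ hs (hF.comp hsm) hi
  refine ⟨integrable_finsetSum _ fun e _ => h1 e, ?_⟩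
  rw [← show _ = ∫ ω, ∑ e : Step d, (ρ e ω).toReal * F (shift e.1 ω) ∂(marg1 μ) from h2]
  conv_rhs => rw [hinv]
  unfold marg2
  rw [integral_map hsm.aemeasurable hF.aestronglyMeasurable]
  rfl

lemma lint_refM {F : EnvSp d → ℝ≥0∞} (hF : Measurable F) :
    ∫⁻ q, F q ∂(refM μ) =
      ∑ e : Step d, ∫⁻ ω, ENNReal.ofReal (srw d ω e) * F (ω, e) ∂(marg1 μ) := by
  have hm : ∀ e : Step d, Measurable fun ω : Config d => (ω, e) := fun e =>
    measurable_id.prodMk measurable_const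
  unfold refM
  rw [lintegral_sum_measure, tsum_fintype]
  refine Finset.sum_congr rfl fun e _ => ?_
  rw [lintegral_map hF (hm e)]
  exact lintegral_withDensity_eq_lintegral_mul _
    (measurable_srw e).ennreal_ofReal (hF.comp (hm e))

/-- The density of `μ` with respect to `refM μ`. -/
def dens (ρ : Step d → Config d → ℝ≥0∞) (q : EnvSp d) : ℝ≥0∞ :=
  ρ q.2 q.1 / ENNReal.ofReal (srw d q.1 q.2)

lemma measurable_dens (hρ : ∀ e, Measurable (ρ e)) : Measurable (dens ρ) :=
  measurable_from_prod_countable_left fun e => (hρ e).div (measurable_srw e).ennreal_ofReal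

lemma eq_withDensity (hρ : ∀ e, Measurable (ρ e))
    (hs : ∀ e, slice μ e = (marg1 μ).withDensity (ρ e))
    (h0 : ∀ᵐ ω ∂(marg1 μ), ∀ e, 0 < ρ e ω → 0 < srw d ω e) :
    μ = (refM μ).withDensity (dens ρ) := by
  have hd := measurable_dens hρ
  ext A hA
  have hAi : Measurable (A.indicator (1 : EnvSp d → ℝ≥0∞)) := measurable_one.indicator hA
  rw [withDensity_apply _ hA, ← lintegral_indicator hA, lint_refM (hd.indicator hA),
    ← lintegral_indicator_one hA, lint_decomp hρ hs hAi]
  refine Finset.sum_congr rfl fun e _ => lintegral_congr_ae ?_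
  filter_upwards [h0] with ω h
  by_cases hq : (ω, e) ∈ A
  · simp only [Set.indicator_of_mem hq, Pi.one_apply, mul_one, dens]
    rcases eq_or_ne (ρ e ω) 0 with h1 | h1
    · simp [h1]
    · have h2 := h e (pos_iff_ne_zero.2 h1)
      rw [ENNReal.mul_div_cancel (ENNReal.ofReal_pos.2 h2).ne' ENNReal.ofReal_ne_top]
  · simp [hq]

lemma finite_refM [IsProbabilityMeasure μ] (hc : ∀ᵐ ω ∂(marg1 μ), ω ∈ cluZero d) :
    IsFiniteMeasure (refM μ) := by
  have hQ : IsProbabilityMeasure (marg1 μ) :=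
    Measure.isProbabilityMeasure_map measurable_fst.aemeasurable
  constructor
  rw [← lintegral_one, lint_refM measurable_const, ← lintegral_finsetSum]
  · have : ∫⁻ ω, ∑ e : Step d, ENNReal.ofReal (srw d ω e) * 1 ∂(marg1 μ) =
        ∫⁻ ω, 1 ∂(marg1 μ) := by
      refine lintegral_congr_ae ?_
      filter_upwards [hc] with ω h
      simp only [mul_one]
      rw [← ENNReal.ofReal_sum_of_nonneg fun e _ => srw_nonneg ω e, srw_sum h]
      simp
    rw [this]; simp
  · exact fun e _ => (measurable_srw e).ennreal_ofReal.mul measurable_const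

/-- relative entropy at `ω` -/
def KL (ρ : Step d → Config d → ℝ≥0∞) (ω : Config d) : ℝ :=
  ∑ e : Step d, (ρ e ω).toReal * Real.log ((ρ e ω).toReal / srw d ω e)

lemma klFun_nonneg {x : ℝ} (hx : 0 ≤ x) : 0 ≤ SRWPC.klFun x := by
  unfold SRWPC.klFun
  rcases hx.eq_or_lt with h | h
  · simp [← h]
  · have h1 := Real.log_le_sub_one_of_pos (x := x⁻¹) (by positivity)
    rw [Real.log_inv] at h1
    have h2 := mul_le_mul_of_nonneg_left h1 h.le
    have h3 : x * (x⁻¹ - 1) = 1 - x := by field_simp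
    rw [h3] at h2
    linarith

lemma measurable_klFun : Measurable SRWPC.klFun := by
  unfold SRWPC.klFun
  exact ((measurable_id.mul Real.measurable_log).sub measurable_id).add measurable_const

lemma entropy_eq [IsProbabilityMeasure μ] (hρ : ∀ e, Measurable (ρ e))
    (hs : ∀ e, slice μ e = (marg1 μ).withDensity (ρ e))
    (h0 : ∀ᵐ ω ∂(marg1 μ), ∀ e, 0 < ρ e ω → 0 < srw d ω e)
    (hc : ∀ᵐ ω ∂(marg1 μ), ω ∈ cluZero d) :
    ∫⁻ q, ENNReal.ofReal (SRWPC.klFun ((μ.rnDeriv (refM μ)) q).toReal) ∂(refM μ) =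
      ∫⁻ ω, ENNReal.ofReal (KL ρ ω) ∂(marg1 μ) := by
  have hfin := finite_refM hc
  have hd := measurable_dens hρ
  have h1 : μ.rnDeriv (refM μ) =ᵐ[refM μ] dens ρ := by
    have := Measure.rnDeriv_withDensity (refM μ) hd
    rwa [← eq_withDensity hρ hs h0] at this
  have h2 : ∫⁻ q, ENNReal.ofReal (SRWPC.klFun ((μ.rnDeriv (refM μ)) q).toReal) ∂(refM μ) =
      ∫⁻ q, ENNReal.ofReal (SRWPC.klFun (dens ρ q).toReal) ∂(refM μ) := by
    refine lintegral_congr_ae ?_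
    filter_upwards [h1] with q h
    rw [h]
  have hmF : Measurable fun q => ENNReal.ofReal (SRWPC.klFun (dens ρ q).toReal) :=
    (measurable_klFun.comp hd.ennreal_toReal).ennreal_ofReal
  have hm : ∀ e : Step d, Measurable fun ω : Config d => (ω, e) := fun e =>
    measurable_id.prodMk measurable_const
  rw [h2, lint_refM hmF, ← lintegral_finsetSum]
  · refine lintegral_congr_ae ?_
    filter_upwards [h0, hc, rho_sum hρ hs] with ω h3 h4 h5
    have hne : ∀ e, ρ e ω ≠ ∞ := by
      intro e h
      have := Finset.single_le_sum (f := fun e => ρ e ω) (fun _ _ => zero_le) (Finset.mem_univ e)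
      rw [h5, h] at this
      simp at this
    have h6 : ∑ e, (ρ e ω).toReal = 1 := by
      rw [← ENNReal.toReal_sum fun e _ => hne e, h5]; rfl
    have h7 : ∀ e, ENNReal.ofReal (srw d ω e) * ENNReal.ofReal (SRWPC.klFun (dens ρ (ω, e)).toReal) =
        ENNReal.ofReal (srw d ω e * SRWPC.klFun ((ρ e ω).toReal / srw d ω e)) := by
      intro e
      rw [ENNReal.ofReal_mul (srw_nonneg ω e)]
      simp [dens, ENNReal.toReal_div, ENNReal.toReal_ofReal (srw_nonneg ω e)]
    have h8 : ∀ e, srw d ω e * SRWPC.klFun ((ρ e ω).toReal / srw d ω e) =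
        (ρ e ω).toReal * Real.log ((ρ e ω).toReal / srw d ω e) - (ρ e ω).toReal + srw d ω e := by
      intro e
      unfold SRWPC.klFun
      rcases (srw_nonneg ω e).eq_or_lt with h | h
      · have : ρ e ω = 0 := by
          by_contra hne
          have := h3 e (pos_iff_ne_zero.2 hne)
          linarith
        simp [this, ← h]
      · field_simp
    simp_rw [h7]
    rw [← ENNReal.ofReal_sum_of_nonneg fun e _ => mul_nonneg (srw_nonneg ω e)
      (klFun_nonneg (div_nonneg ENNReal.toReal_nonneg (srw_nonneg ω e)))]
    congr 1
    simp_rw [h8]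
    rw [Finset.sum_add_distrib, Finset.sum_sub_distrib, h6, srw_sum h4]
    unfold KL
    ring
  · exact fun e _ => (measurable_srw e).ennreal_ofReal.mul (hmF.comp (hm e))

end Decomp

end SRWPC


namespace SRWPC

section Final
variable {d : ℕ}

/-- exponential growth rate strictly above `c` -/
def Ac (f : EnvSp d → ℝ) (c : ℝ) : Set (Config d) :=
  {ω | ∃ k N : ℕ, ∀ n : ℕ, N ≤ n → (c + 1 / ((k : ℝ) + 1)) * n ≤ un f n ω}

lemma measurable_un {f : EnvSp d → ℝ} (hf : Measurable f) (n : ℕ) : Measurable (un f n) :=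
  Real.measurable_log.comp (measurable_Zn hf n)

lemma measurableSet_Ac {f : EnvSp d → ℝ} (hf : Measurable f) (c : ℝ) :
    MeasurableSet (Ac f c) := by
  refine measurableSet_setOfPred.2 (Measurable.exists fun k => Measurable.exists fun N =>
    Measurable.forall fun n => Measurable.imp measurable_const ?_)
  exact measurableSet_setOfPred.1 (measurableSet_le measurable_const (measurable_un hf n))

lemma Ac_step {f : EnvSp d → ℝ} {C : ℝ} (hC : ∀ q, |f q| ≤ C) (c : ℝ) {ω : Config d}
    (h : ω ∈ cluZero d) {e : V d} (he : e ∈ Ud d) (ho : edgeOpen ω 0 e)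
    (hA : shift e ω ∈ Ac f c) : ω ∈ Ac f c := by
  obtain ⟨k, N, hN⟩ := hA
  set K := C + Real.log (Ud d).card
  set δ : ℝ := 1 / ((k : ℝ) + 1) - 1 / (((k + 1 : ℕ) : ℝ) + 1) with hδ
  have hδp : 0 < δ := by
    rw [hδ, sub_pos]
    push_cast
    apply one_div_lt_one_div_of_lt <;> linarith [(Nat.cast_nonneg k : (0 : ℝ) ≤ k)]
  obtain ⟨m, hm⟩ := exists_nat_gt ((K + c + 1 / (((k + 1 : ℕ) : ℝ) + 1)) / δ)
  rw [div_lt_iff₀ hδp] at hm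
  refine ⟨k + 1, max N m + 1, fun n hn => ?_⟩
  obtain ⟨n, rfl⟩ : ∃ n', n = n' + 1 := ⟨n - 1, by omega⟩
  have hn1 : N ≤ n := by have := le_max_left N m; omega
  have hn2 : m ≤ n := by have := le_max_right N m; omega
  have h1 := un_step hC n h he ho
  have h2 := hN n hn1
  have h3 : (m : ℝ) * δ ≤ n * δ := by gcongr
  have h4 : 1 / ((k : ℝ) + 1) = δ + 1 / (((k + 1 : ℕ) : ℝ) + 1) := by rw [hδ]; ring
  rw [h4] at h2
  set t := 1 / (((k + 1 : ℕ) : ℝ) + 1)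
  have h5 : (c + t) * ((n + 1 : ℕ) : ℝ) = (c + (δ + t)) * n - n * δ + c + t := by
    push_cast; ring
  rw [h5]
  linarith

lemma Ac_inv {f : EnvSp d → ℝ} {C : ℝ} (hC : ∀ q, |f q| ≤ C) (c : ℝ) :
    ∀ ω ∈ cluZero d, ∀ e ∈ Ud d, edgeOpen ω 0 e → (ω ∈ Ac f c ↔ shift e ω ∈ Ac f c) := by
  intro ω h e he ho
  refine ⟨fun hA => ?_, Ac_step hC c h he ho⟩
  obtain ⟨h1, h2⟩ := neg_open he ho
  refine Ac_step hC c (shift_mem_cluZero h he ho) h1 h2 ?_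
  rwa [shift_shift, neg_add_cancel, shift_zero]

lemma liminf_of_Ac {f : EnvSp d → ℝ} {C : ℝ} (hC : ∀ q, |f q| ≤ C) {c : ℝ} {ω : Config d}
    (h : ω ∈ cluZero d) (hA : ω ∈ Ac f c) :
    (c : EReal) ≤ Filter.liminf (fun n : ℕ =>
          (((n : ℝ)⁻¹ : EReal) * ENNReal.log (ENNReal.ofReal (Zn f n ω)))) Filter.atTop := by
  obtain ⟨k, N, hN⟩ := hA
  refine le_liminf_of_le (by isBoundedDefault) ?_
  filter_upwards [eventually_ge_atTop N, eventually_gt_atTop 0] with n hn hn0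
  have h1 := hN n hn
  have hz := Zn_pos hC n h
  rw [ENNReal.log_ofReal_of_pos hz]
  have hn' : (0 : ℝ) < n := by exact_mod_cast hn0
  rw [← EReal.coe_inv, ← EReal.coe_mul, EReal.coe_le_coe_iff]
  change c ≤ (n : ℝ)⁻¹ * un f n ω
  rw [inv_mul_eq_div, le_div_iff₀ hn']
  have : 0 ≤ 1 / ((k : ℝ) + 1) * n := by positivity
  linarith

lemma KL_bounds {ρ : Step d → Config d → ℝ≥0∞} {ω : Config d} (hω : ω ∈ cluZero d)
    (hs : ∑ e, (ρ e ω).toReal = 1) (h0 : ∀ e, 0 < (ρ e ω).toReal → 0 < srw d ω e) :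
    0 ≤ KL ρ ω ∧ KL ρ ω ≤ Real.log (Ud d).card := by
  constructor
  · have := gibbs (a := fun _ => (1 : ℝ)) (srw_nonneg ω) (fun e => ENNReal.toReal_nonneg) hs h0
      (fun _ _ => one_pos)
    simp only [Real.log_one, zero_sub, mul_neg, Finset.sum_neg_distrib, mul_one, srw_sum hω] at this
    unfold KL
    linarith
  · unfold KL
    calc _ ≤ ∑ e : Step d, (ρ e ω).toReal * Real.log (Ud d).card := by
          refine Finset.sum_le_sum fun e _ => ?_
          rcases (ENNReal.toReal_nonneg (a := ρ e ω)).eq_or_lt with h | h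
          · simp [← h]
          · have h1 := h0 e h
            have h2 := srw_ge hω e ((srw_pos_iff hω e).1 h1)
            have hcard : (0 : ℝ) < (Ud d).card := by
              exact_mod_cast Finset.card_pos.2 ⟨e.1, e.2⟩
            have h3 : (ρ e ω).toReal ≤ 1 := by
              rw [← hs]
              exact Finset.single_le_sum (f := fun e => (ρ e ω).toReal)
                (fun _ _ => ENNReal.toReal_nonneg) (Finset.mem_univ e)
            refine mul_le_mul_of_nonneg_left (Real.log_le_log (by positivity) ?_) h.le
            rw [div_le_iff₀ h1]
            rw [div_le_iff₀ hcard] at h2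
            linarith
      _ = _ := by rw [← Finset.sum_mul, hs, one_mul]

lemma key_pos {P : Measure (Config d)} [IsProbabilityMeasure P]
    {f : EnvSp d → ℝ} (hf : Measurable f) {C : ℝ} (hC : ∀ q, |f q| ≤ C)
    {μ : ProbabilityMeasure (EnvSp d)} (hμ : μ ∈ M1star d (P[|cluZero d])) {c : ℝ}
    (hc : (c : EReal) < ((pairing f μ : ℝ) : EReal) -
      ((entI (P[|cluZero d]) μ : ℝ≥0∞) : EReal)) :
    P (cluZero d ∩ Ac f c) ≠ 0 := by
  intro hnull
  have hif : μ.toMeasure ≪ refM μ.toMeasure := by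
    by_contra hcon
    rw [entI, if_neg (fun h => hcon h.2)] at hc
    simp at hc
  rw [entI, if_pos ⟨hμ, hif⟩] at hc
  obtain ⟨hinv, hac, ρ, hρ, hs, hpos⟩ := hμ
  unfold pairing at hc
  set m : Measure (EnvSp d) := μ.toMeasure with hm
  have hmp : IsProbabilityMeasure m := by rw [hm]; infer_instance
  set Q := marg1 m with hQ
  have hQp : IsProbabilityMeasure Q :=
    Measure.isProbabilityMeasure_map measurable_fst.aemeasurable
  have hclu : ∀ᵐ ω ∂Q, ω ∈ cluZero d := hac.ae_le (ae_cond_mem measurableSet_cluZero)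
  have h0 : ∀ᵐ ω ∂Q, ∀ e, 0 < ρ e ω → 0 < srw d ω e := by
    filter_upwards [hclu, hac.ae_le (ae_all_iff.2 hpos)] with ω h1 h2 e h3
    exact (srw_pos_iff h1 e).2 ((h2 e).1 h3)
  have h0' : ∀ᵐ ω ∂Q, ∀ e, 0 < (ρ e ω).toReal → 0 < srw d ω e := by
    filter_upwards [h0] with ω h e he
    exact h e (ENNReal.toReal_pos_iff.1 he).1
  have hrs : ∀ᵐ ω ∂Q, ∑ e, (ρ e ω).toReal = 1 := by
    filter_upwards [rho_sum hρ hs] with ω h5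
    have hne : ∀ e, ρ e ω ≠ ∞ := by
      intro e h
      have := Finset.single_le_sum (f := fun e => ρ e ω) (fun _ _ => zero_le) (Finset.mem_univ e)
      rw [h5, h] at this
      simp at this
    rw [← ENNReal.toReal_sum fun e _ => hne e, h5]; rfl
  have hKm : Measurable (KL ρ) :=
    Finset.measurable_sum _ fun e _ => (hρ e).ennreal_toReal.mul
      (Real.measurable_log.comp ((hρ e).ennreal_toReal.div (measurable_srw e)))
  have hKb : ∀ᵐ ω ∂Q, 0 ≤ KL ρ ω ∧ KL ρ ω ≤ Real.log (Ud d).card := by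
    filter_upwards [hclu, hrs, h0'] with ω h1 h2 h3
    exact KL_bounds h1 h2 h3
  have hKi : Integrable (KL ρ) Q := by
    refine Integrable.of_bound hKm.aestronglyMeasurable (Real.log (Ud d).card) ?_
    filter_upwards [hKb] with ω h
    rw [Real.norm_eq_abs, abs_of_nonneg h.1]
    exact h.2
  have hfi : Integrable f m :=
    Integrable.of_bound hf.aestronglyMeasurable C (ae_of_all _ hC)
  obtain ⟨hf1, hf2⟩ := int_decomp hρ hs hf hfi
  have hFi : Integrable (fun ω => ∑ e : Step d, (ρ e ω).toReal * f (ω, e)) Q :=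
    integrable_finsetSum _ fun e _ => hf1 e
  set g : Config d → ℝ := fun ω => ∑ e : Step d, (ρ e ω).toReal * f (ω, e) - KL ρ ω with hg
  have hgi : Integrable g Q := hFi.sub hKi
  have hgint : ∫ ω, g ω ∂Q = ∫ q, f q ∂m - ∫ ω, KL ρ ω ∂Q := by
    rw [hf2, hg, integral_sub hFi hKi]
  rw [entropy_eq hρ hs h0 hclu, ← ofReal_integral_eq_lintegral_ofReal hKi
    (hKb.mono fun ω h => h.1), EReal.coe_ennreal_ofReal,
    max_eq_left (integral_nonneg_of_ae (hKb.mono fun ω h => h.1)), ← EReal.coe_sub,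
    EReal.coe_lt_coe_iff, ← hgint] at hc
  obtain ⟨k, hk⟩ := exists_nat_one_div_lt (sub_pos.2 hc)
  have hAQ : ∀ᵐ ω ∂Q, ω ∉ Ac f c := by
    have hA0 : P[|cluZero d] (Ac f c) = 0 := by
      rw [cond_apply measurableSet_cluZero, hnull, mul_zero]
    exact measure_eq_zero_iff_ae_notMem.1 (hac hA0)
  have := max_lim (Q := Q) (u := un f) (g := g) (sh := fun e : Step d => shift e.1)
    (r := fun e ω => (ρ e ω).toReal) (c := c + 1 / ((k : ℝ) + 1))
    (measurable_un hf) ?_ (fun ω => by simp [un, Zn_zero]) hgi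
    (fun _ _ => ENNReal.toReal_nonneg) hrs (inv_decomp hρ hs hinv) ?_ ?_
  · linarith
  · intro n
    refine Integrable.of_bound (measurable_un hf n).aestronglyMeasurable (n * C) ?_
    filter_upwards [hclu] with ω h
    exact un_abs hC n h
  · intro n
    filter_upwards [hclu, hrs, h0'] with ω h1 h2 h3
    have hz : ∀ e : Step d, 0 < srw d ω e → 0 < Zn f n (shift e.1 ω) := fun e he =>
      Zn_pos hC n (shift_mem_cluZero h1 e.2 ((srw_pos_iff h1 e).1 he))
    have h4 := gibbs (a := fun e : Step d => Real.exp (f (ω, e)) * Zn f n (shift e.1 ω))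
      (srw_nonneg ω) (fun e => ENNReal.toReal_nonneg) h2 h3
      (fun e he => mul_pos (Real.exp_pos _) (hz e he))
    rw [← Zn_succ] at h4
    refine le_trans (le_of_eq ?_) h4
    simp only [hg, KL]
    rw [← Finset.sum_sub_distrib, ← Finset.sum_add_distrib]
    refine Finset.sum_congr rfl fun e _ => ?_
    rcases (ENNReal.toReal_nonneg (a := ρ e ω)).eq_or_lt with h | h
    · simp [← h]
    · rw [Real.log_mul (Real.exp_pos _).ne' (hz e (h3 e h)).ne', Real.log_exp]
      unfold un
      ring
  · filter_upwards [hAQ] with ω h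
    simp only [Ac, Set.mem_ofPred_eq, not_exists, not_forall, not_le] at h
    obtain ⟨n, _, hn⟩ := h k 0
    exact ⟨n, hn⟩

end Final

end SRWPC
open SRWPC in
/-- **Lower bound for the logarithmic moment generating functions** (Corollary 3.5). -/
theorem log_mgf_lower_bound
    (d : ℕ) (hd : 2 ≤ d) (p : ℝ) (hp0 : 0 < p) (hp1 : p < 1) (hpc : pc d < p)
    (P : Measure (Config d)) (hP : IsBernoulli d p P)
    (f : BoundedContinuousFunction (EnvSp d) ℝ) :
    (∀ᵐ ω ∂(P[|cluZero d]),
      (⨆ μ ∈ M1star d (P[|cluZero d]),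
          ((pairing (⇑f) μ : ℝ) : EReal) - ((entI (P[|cluZero d]) μ : ℝ≥0∞) : EReal)) ≤
        Filter.liminf (fun n : ℕ =>
          (((n : ℝ)⁻¹ : EReal) * ENNReal.log (ENNReal.ofReal
            (qE (srw d) ω (fun s : Fin n → Step d =>
              Real.exp (∑ k : Fin n, f (envPair ω s k)))))))
          Filter.atTop) ∧
    (⨆ μ ∈ M1star d (P[|cluZero d]),
        ((pairing (⇑f) μ : ℝ) : EReal) - ((entI (P[|cluZero d]) μ : ℝ≥0∞) : EReal)) =
      ⨆ μ : ProbabilityMeasure (EnvSp d),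
        ((pairing (⇑f) μ : ℝ) : EReal) - ((entI (P[|cluZero d]) μ : ℝ≥0∞) : EReal) := by
  have hPp := hP.1
  have hfm : Measurable (f : EnvSp d → ℝ) := f.continuous.measurable
  have hC : ∀ q, |f q| ≤ ‖f‖ := fun q => f.norm_coe_le_norm q
  constructor
  · have hall : ∀ᵐ ω ∂(P[|cluZero d]), ∀ c : ℚ,
        (((c : ℝ) : EReal) < ⨆ μ ∈ M1star d (P[|cluZero d]),
          ((pairing (⇑f) μ : ℝ) : EReal) - ((entI (P[|cluZero d]) μ : ℝ≥0∞) : EReal)) →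
        ω ∈ Ac f c := by
      refine ae_all_iff.2 fun c => ?_
      by_cases hlt : (((c : ℝ) : EReal) < ⨆ μ ∈ M1star d (P[|cluZero d]),
          ((pairing (⇑f) μ : ℝ) : EReal) - ((entI (P[|cluZero d]) μ : ℝ≥0∞) : EReal))
      · obtain ⟨μ, hμ⟩ := lt_iSup_iff.1 hlt
        obtain ⟨hμM, hμc⟩ := lt_iSup_iff.1 hμ
        have h1 := key_pos hfm hC hμM hμc
        have h2 := cluster_zero_one hP hp0 (by omega) (measurableSet_Ac hfm c) (Ac_inv hC c) h1
        have h3 : ∀ᵐ ω ∂(P[|cluZero d]), ω ∈ Ac f c := by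
          rw [ae_iff]
          change P[|cluZero d] (Ac f c)ᶜ = 0
          rw [cond_apply measurableSet_cluZero, ← Set.sdiff_eq, h2, mul_zero]
        filter_upwards [h3] with ω h _
        exact h
      · exact ae_of_all _ fun ω h => absurd h hlt
    filter_upwards [hall, ae_cond_mem measurableSet_cluZero] with ω h1 h2
    refine le_of_forall_lt fun a ha => ?_
    obtain ⟨c, hc1, hc2⟩ := EReal.exists_rat_btwn_of_lt ha
    exact hc1.trans_le (liminf_of_Ac hC h2 (h1 c hc2))
  · refine le_antisymm (iSup_mono fun μ => iSup_le fun _ => le_rfl) (iSup_le fun μ => ?_)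
    by_cases hμ : μ ∈ M1star d (P[|cluZero d])
    · exact le_iSup₂_of_le μ hμ le_rfl
    · rw [entI, if_neg (fun h => hμ h.1)]
      simp
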